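/- arXiv:1410.7339 — 3 statements merged into one kernel-verified Lean document; each statement's English description precedes it below -/
import Mathlib

section
/- Let n, m ≥ 1 be integers, γ ∈ (0,1), d ≥ 0 an integer, and let ψ : ℝⁿ → ℝᵐ be a polynomial map of degree at most d that is not identically zero. Then there exist ε > 0 and C ∈ (0,∞), depending only on n, m, γ and ψ, with the following property: whenever u, v : B₁(0) → ℝᵐ are d-times continuously differentiable functions with ‖u − ψ‖_{C^d(B₁(0))} + ‖v − ψ‖_{C^d(B₁(0))} < ε, one has ∫_{B_γ(0)} |u − v|² ≤ C ∫_{B₁(0)} min(|u − v|, |u + v|)². -/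
open Metric MeasureTheory

noncomputable section

/-- The `C^d(B₁(0))` norm `Σ_{j=0}^d sup_{B₁(0)} |D^j w|`. -/
def CdNorm (n m d : ℕ) (w : EuclideanSpace ℝ (Fin n) → EuclideanSpace ℝ (Fin m)) : ℝ :=
  ∑ j ∈ Finset.range (d + 1),
    ⨆ x ∈ ball (0 : EuclideanSpace ℝ (Fin n)) 1,
      ‖iteratedFDerivWithin ℝ j w (ball 0 1) x‖

end

/-!
Let `a = u - v`, let `b` be half of a component of `u + v` along which `ψ` is a nonzero polynomial
`p`, and let `k` be the degree of `p`. The `k`-th derivatives of `a` and of `b - p` are small;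
if `k = 0` this already gives `|a| ≤ |b|`, so let `k > 0`.
Around a point `y` consider the scale `r = ‖a y‖ ^ (1 / k)`. By Taylor's theorem, on a segment of
length at most `r` issuing from `y` in a direction `w` at which the leading form of `p` is not
small, both functions are, up to an error small compared with `r ^ k`, polynomials of degree at
most `k` in one variable: for `a` the constant coefficient is `a y`, of size `r ^ k`, and for `b`
the leading coefficient is comparable to `r ^ k`. Such a polynomial is at least a fixed multiple of
`r ^ k` at all but `k` of finitely many given nodes. Hence `min |a| |b|` is at least a multiple of
`|a y|` on a fixed proportion of the ball of radius `r` around `y`, and a Vitali covering by such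
balls sums this up.
-/

section OneVariable

variable {𝕜 ι : Type*}

theorem coeff_eq_sum_eval_mul_coeff_basis [Field 𝕜] [DecidableEq ι] {s : Finset ι} {v : ι → 𝕜}
    (hv : Set.InjOn v s) {P : Polynomial 𝕜} (hP : P.degree < s.card) (i : ℕ) :
    P.coeff i = ∑ j ∈ s, P.eval (v j) * (Lagrange.basis s v j).coeff i := by
  conv_lhs => rw [Lagrange.eq_interpolate hv hP, Lagrange.interpolate_apply]
  simp only [Polynomial.finsetSum_coeff, Polynomial.coeff_C_mul]

variable [NormedField 𝕜]

theorem exists_pos_forall_exists_mul_norm_coeff_le_norm_eval {s : Finset ι} (hs : s.Nonempty)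
    {v : ι → 𝕜} (hv : Set.InjOn v s) (i : ℕ) :
    ∃ c : ℝ, 0 < c ∧ ∀ P : Polynomial 𝕜, P.degree < s.card →
      ∃ j ∈ s, c * ‖P.coeff i‖ ≤ ‖P.eval (v j)‖ := by
  classical
  set S := ∑ j ∈ s, ‖(Lagrange.basis s v j).coeff i‖
  have hS : 0 < 1 + S := by positivity
  refine ⟨(1 + S)⁻¹, inv_pos.2 hS, fun P hP ↦ ?_⟩
  obtain ⟨j, hj, hmax⟩ := s.exists_max_image (fun j ↦ ‖P.eval (v j)‖) hs
  refine ⟨j, hj, (inv_mul_le_iff₀ hS).2 ?_⟩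
  calc ‖P.coeff i‖
      = ‖∑ l ∈ s, P.eval (v l) * (Lagrange.basis s v l).coeff i‖ := by
        rw [← coeff_eq_sum_eval_mul_coeff_basis hv hP]
    _ ≤ ∑ l ∈ s, ‖P.eval (v j)‖ * ‖(Lagrange.basis s v l).coeff i‖ := by
        refine norm_sum_le_of_le _ fun l hl ↦ (norm_mul_le _ _).trans ?_
        gcongr
        exact hmax l hl
    _ = S * ‖P.eval (v j)‖ := by rw [← Finset.mul_sum, mul_comm]
    _ ≤ (1 + S) * ‖P.eval (v j)‖ := by gcongr; linarith

variable [Fintype ι] {v : ι → 𝕜}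

theorem exists_pos_forall_card_norm_eval_lt_le (hv : Function.Injective v) (k i : ℕ) :
    ∃ c : ℝ, 0 < c ∧ ∀ P : Polynomial 𝕜, P.natDegree ≤ k →
      ({j | ‖P.eval (v j)‖ < c * ‖P.coeff i‖} : Finset ι).card ≤ k := by
  classical
  have node_bound (s : Finset ι) : ∃ c : ℝ, 0 < c ∧ ∀ P : Polynomial 𝕜, s.card = k + 1 →
      P.natDegree ≤ k → ∃ j ∈ s, c * ‖P.coeff i‖ ≤ ‖P.eval (v j)‖ := by
    by_cases hs : s.card = k + 1
    · obtain ⟨c, hc, h⟩ := exists_pos_forall_exists_mul_norm_coeff_le_norm_eval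
        (Finset.card_pos.1 (by omega)) (hv.injOn (s := s)) i
      exact ⟨c, hc, fun P _ hP ↦ h P <| (Polynomial.degree_le_of_natDegree_le hP).trans_lt <|
        hs ▸ WithBot.coe_lt_coe.2 k.lt_succ_self⟩
    · exact ⟨1, one_pos, fun _ h ↦ absurd h hs⟩
  choose c hc hcs using node_bound
  obtain ⟨s₀, -, hmin⟩ := Finset.univ.exists_min_image c Finset.univ_nonempty
  refine ⟨c s₀, hc s₀, fun P hP ↦ ?_⟩
  by_contra! hcard
  obtain ⟨s, hsub, hs⟩ := Finset.exists_subset_card_eq (Nat.succ_le_of_lt hcard)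
  obtain ⟨j, hj, hle⟩ := hcs s P hs hP
  refine ((Finset.mem_filter.1 (hsub hj)).2.trans_le ?_).not_ge hle
  gcongr
  exact hmin s (Finset.mem_univ s)

theorem exists_pos_forall_exists_mul_norm_coeff_le_norm_eval_pair (hv : Function.Injective v)
    {k : ℕ} (hk : 2 * k < Fintype.card ι) (i i' : ℕ) :
    ∃ c : ℝ, 0 < c ∧ ∀ P Q : Polynomial 𝕜, P.natDegree ≤ k → Q.natDegree ≤ k →
      ∃ j, c * ‖P.coeff i‖ ≤ ‖P.eval (v j)‖ ∧ c * ‖Q.coeff i'‖ ≤ ‖Q.eval (v j)‖ := by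
  classical
  obtain ⟨c, hc, hP⟩ := exists_pos_forall_card_norm_eval_lt_le hv k i
  obtain ⟨c', hc', hQ⟩ := exists_pos_forall_card_norm_eval_lt_le hv k i'
  refine ⟨min c c', lt_min hc hc', fun P Q hPk hQk ↦ ?_⟩
  have hlt : ((Finset.univ.filter fun j ↦ ‖P.eval (v j)‖ < c * ‖P.coeff i‖) ∪
      Finset.univ.filter fun j ↦ ‖Q.eval (v j)‖ < c' * ‖Q.coeff i'‖).card < Fintype.card ι :=
    (Finset.card_union_le _ _).trans_lt (by linarith [hP P hPk, hQ Q hQk])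
  obtain ⟨j, -, hj⟩ := Finset.exists_mem_notMem_of_card_lt_card (Finset.card_univ (α := ι) ▸ hlt)
  simp only [Finset.mem_union, Finset.mem_filter, Finset.mem_univ, true_and, not_or, not_lt] at hj
  exact ⟨j, (by gcongr; exact min_le_left _ _ : _ ≤ c * ‖P.coeff i‖).trans hj.1,
    (by gcongr; exact min_le_right _ _ : _ ≤ c' * ‖Q.coeff i'‖).trans hj.2⟩

end OneVariable

section LineRestriction

variable {σ R : Type*} [CommSemiring R]

theorem eval_smul_of_isHomogeneous {p : MvPolynomial σ R} {k : ℕ} (hp : p.IsHomogeneous k)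
    (r : R) (z : σ → R) : MvPolynomial.eval (r • z) p = r ^ k * MvPolynomial.eval z p := by
  simp only [MvPolynomial.eval_eq, Finset.mul_sum]
  refine Finset.sum_congr rfl fun d hd ↦ ?_
  simp only [Pi.smul_apply, smul_eq_mul, mul_pow, Finset.prod_mul_distrib,
    Finset.prod_pow_eq_pow_sum, ← hp.degree_eq_sum_deg_support hd]
  ring

theorem homogeneousComponent_totalDegree_ne_zero {p : MvPolynomial σ R} (hp : p ≠ 0) :
    MvPolynomial.homogeneousComponent p.totalDegree p ≠ 0 := by
  obtain ⟨d, hd, hdeg⟩ := p.support.exists_mem_eq_sup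
    (MvPolynomial.support_nonempty.2 hp) fun d ↦ d.sum fun _ e ↦ e
  refine MvPolynomial.ne_zero_iff.2 ⟨d, ?_⟩
  rw [MvPolynomial.coeff_homogeneousComponent,
    if_pos (show d.degree = p.totalDegree from hdeg.symm)]
  exact MvPolynomial.mem_support_iff.1 hd

/-- The restriction of the polynomial `p` to the affine line `t ↦ y + t z`, as a polynomial
in the parameter `t`. -/
noncomputable def lineRestriction (p : MvPolynomial σ R) (y z : σ → R) : Polynomial R :=
  MvPolynomial.aeval (fun i ↦ Polynomial.C (y i) + Polynomial.C (z i) * Polynomial.X) p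

theorem eval_lineRestriction (p : MvPolynomial σ R) (y z : σ → R) (t : R) :
    (lineRestriction p y z).eval t = MvPolynomial.eval (y + t • z) p := by
  rw [lineRestriction, ← Polynomial.coe_evalRingHom, MvPolynomial.map_aeval, MvPolynomial.eval]
  congr 2
  · exact RingHom.ext fun _ ↦ Polynomial.eval_C
  · simp [mul_comm t, Pi.add_def]

theorem natDegree_lineRestriction_le {p : MvPolynomial σ R} {k : ℕ} (hp : p.totalDegree ≤ k)
    (y z : σ → R) : (lineRestriction p y z).natDegree ≤ k := by
  simpa only [lineRestriction, mul_one] using MvPolynomial.aeval_natDegree_le (n := 1) p hp _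
    fun i ↦ by compute_degree

theorem prod_map_toMultiset {A : Type*} [CommMonoid A] (d : σ →₀ ℕ) (g : σ → A) :
    (d.toMultiset.map g).prod = d.prod fun i e ↦ g i ^ e := by
  simp only [Finsupp.toMultiset_map, Finsupp.prod_toMultiset, pow_zero, pow_add, implies_true,
    Finsupp.prod_mapDomain_index]

theorem coeff_lineRestriction_monomial (d : σ →₀ ℕ) (c : R) (y z : σ → R) :
    (lineRestriction (MvPolynomial.monomial d c) y z).coeff d.degree =
      MvPolynomial.eval z (MvPolynomial.monomial d c) := by
  set f : σ → Polynomial R := fun i ↦ Polynomial.C (y i) + Polynomial.C (z i) * Polynomial.X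
  have hf : ∀ P ∈ d.toMultiset.map f, P.natDegree ≤ 1 :=
    Multiset.forall_mem_map_iff.2 fun i _ ↦ by simp only [f]; compute_degree
  have hcard : (d.toMultiset.map f).card * 1 = d.degree := by
    rw [Multiset.card_map, Finsupp.card_toMultiset, mul_one]
    rfl
  have hfz : (fun P ↦ P.coeff 1) ∘ f = z := by
    ext i
    simp [f]
  rw [lineRestriction, MvPolynomial.aeval_monomial, MvPolynomial.eval_monomial,
    Polynomial.algebraMap_eq, Polynomial.coeff_C_mul, ← prod_map_toMultiset, ← prod_map_toMultiset,
    ← hcard, Polynomial.coeff_multiset_prod_of_natDegree_le _ 1 hf, Multiset.map_map, hfz]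

theorem coeff_lineRestriction {p : MvPolynomial σ R} {k : ℕ} (hp : p.totalDegree ≤ k)
    (y z : σ → R) :
    (lineRestriction p y z).coeff k =
      MvPolynomial.eval z (MvPolynomial.homogeneousComponent k p) := by
  rw [MvPolynomial.homogeneousComponent_apply, map_sum, Finset.sum_filter]
  conv_lhs => rw [p.as_sum, lineRestriction, map_sum, Polynomial.finsetSum_coeff]
  refine Finset.sum_congr rfl fun d hd ↦ ?_
  split_ifs with hdk
  · exact hdk ▸ coeff_lineRestriction_monomial d _ y z
  · have hdeg : d.degree < k := lt_of_le_of_ne ((MvPolynomial.le_totalDegree hd).trans hp) hdk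
    exact Polynomial.coeff_eq_zero_of_natDegree_lt <| (natDegree_lineRestriction_le
      (MvPolynomial.totalDegree_monomial_le d _) y z).trans_lt hdeg

end LineRestriction

section Taylor

variable {E F G : Type*} [NormedAddCommGroup E] [NormedSpace ℝ E] [NormedAddCommGroup F]
  [NormedSpace ℝ F] [NormedAddCommGroup G] [NormedSpace ℝ G] {k : ℕ} {ε ε' : ℝ} {f g : E → F}
  {Ω : Set E}

/-- The function `f` is `k` times continuously differentiable at every point of `Ω`, with `k`-th
derivative bounded by `ε` there: the hypothesis on a function in Taylor's theorem of order `k`. -/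
def HasIteratedFDerivBoundOn (k : ℕ) (ε : ℝ) (f : E → F) (Ω : Set E) : Prop :=
  ∀ x ∈ Ω, ContDiffAt ℝ k f x ∧ ‖iteratedFDeriv ℝ k f x‖ ≤ ε

namespace HasIteratedFDerivBoundOn

theorem mono_bound (hf : HasIteratedFDerivBoundOn k ε f Ω) (hε : ε ≤ ε') :
    HasIteratedFDerivBoundOn k ε' f Ω :=
  fun x hx ↦ ⟨(hf x hx).1, (hf x hx).2.trans hε⟩

theorem add (hf : HasIteratedFDerivBoundOn k ε f Ω) (hg : HasIteratedFDerivBoundOn k ε' g Ω) :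
    HasIteratedFDerivBoundOn k (ε + ε') (f + g) Ω := fun x hx ↦
  ⟨(hf x hx).1.add (hg x hx).1, by
    rw [iteratedFDeriv_add_apply (hf x hx).1 (hg x hx).1]
    exact norm_add_le_of_le (hf x hx).2 (hg x hx).2⟩

theorem sub (hf : HasIteratedFDerivBoundOn k ε f Ω) (hg : HasIteratedFDerivBoundOn k ε' g Ω) :
    HasIteratedFDerivBoundOn k (ε + ε') (f - g) Ω := fun x hx ↦
  ⟨(hf x hx).1.sub (hg x hx).1, by
    rw [iteratedFDeriv_sub_apply (hf x hx).1 (hg x hx).1]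
    exact norm_sub_le_of_le (hf x hx).2 (hg x hx).2⟩

theorem clm_comp (hf : HasIteratedFDerivBoundOn k ε f Ω) {L : F →L[ℝ] G} (hL : ‖L‖ ≤ 1) :
    HasIteratedFDerivBoundOn k ε (L ∘ f) Ω := fun x hx ↦
  ⟨L.contDiff.contDiffAt.comp x (hf x hx).1,
    ((L.norm_iteratedFDeriv_comp_left (hf x hx).1 le_rfl).trans
      (mul_le_of_le_one_left (norm_nonneg _) hL)).trans (hf x hx).2⟩

theorem norm_map_add_sub_sum_iteratedFDeriv_le [CompleteSpace F] {n : ℕ}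
    (hf : HasIteratedFDerivBoundOn (n + 1) ε f Ω) {y w : E}
    (hseg : ∀ t ∈ Set.Icc (0 : ℝ) 1, y + t • w ∈ Ω) :
    ‖f (y + w) - ∑ l ∈ Finset.range (n + 1),
      (l.factorial : ℝ)⁻¹ • iteratedFDeriv ℝ l f y fun _ ↦ w‖ ≤ ε * ‖w‖ ^ (n + 1) := by
  have : 0 ≤ ε := (norm_nonneg _).trans (hf _ (hseg 0 ⟨le_rfl, zero_le_one⟩)).2
  have integrand_le (t : ℝ) (ht : t ∈ Set.uIoc (0 : ℝ) 1) :
      ‖(1 - t) ^ n • iteratedFDeriv ℝ (n + 1) f (y + t • w) fun _ ↦ w‖ ≤ ε * ‖w‖ ^ (n + 1) := by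
    rw [Set.uIoc_of_le zero_le_one] at ht
    have hpow : ‖(1 - t) ^ n‖ ≤ 1 := by
      rw [norm_pow, Real.norm_of_nonneg (sub_nonneg.2 ht.2)]
      exact pow_le_one₀ (sub_nonneg.2 ht.2) (by linarith [ht.1])
    calc ‖(1 - t) ^ n • iteratedFDeriv ℝ (n + 1) f (y + t • w) fun _ ↦ w‖
        ≤ 1 * (‖iteratedFDeriv ℝ (n + 1) f (y + t • w)‖ * ‖w‖ ^ (n + 1)) := by
          rw [norm_smul]
          gcongr
          simpa using (iteratedFDeriv ℝ (n + 1) f (y + t • w)).le_opNorm fun _ ↦ w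
      _ ≤ ε * ‖w‖ ^ (n + 1) := by
          rw [one_mul]
          gcongr
          exact (hf _ (hseg t ⟨ht.1.le, ht.2⟩)).2
  rw [map_add_eq_sum_add_integral_iteratedFDeriv fun t ht ↦ (hf _ (hseg t ht)).1,
    add_sub_cancel_left, norm_smul, norm_inv, RCLike.norm_natCast]
  calc _ ≤ 1 * (ε * ‖w‖ ^ (n + 1) * |(1 : ℝ) - 0|) := by
        gcongr
        · exact inv_le_one_of_one_le₀ (mod_cast n.factorial_pos)
        · exact intervalIntegral.norm_integral_le_of_norm_le_const integrand_le
    _ = ε * ‖w‖ ^ (n + 1) := by simp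

theorem exists_polynomial_norm_sub_eval_le {a : E → ℝ} (hk : k ≠ 0)
    (ha : HasIteratedFDerivBoundOn k ε a Ω) {y w : E}
    (hseg : ∀ t ∈ Set.Icc (0 : ℝ) 1, y + t • w ∈ Ω) :
    ∃ P : Polynomial ℝ, P.natDegree < k ∧ P.coeff 0 = a y ∧
      ∀ t ∈ Set.Icc (0 : ℝ) 1, ‖a (y + t • w) - P.eval t‖ ≤ ε * ‖w‖ ^ k := by
  obtain ⟨n, rfl⟩ := Nat.exists_eq_succ_of_ne_zero hk
  set P : Polynomial ℝ := ∑ l ∈ Finset.range (n + 1),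
    Polynomial.monomial l ((l.factorial : ℝ)⁻¹ * iteratedFDeriv ℝ l a y fun _ ↦ w) with hP
  have heval (t : ℝ) : P.eval t = ∑ l ∈ Finset.range (n + 1),
      (l.factorial : ℝ)⁻¹ • iteratedFDeriv ℝ l a y fun _ ↦ t • w := by
    simp only [hP, Polynomial.eval_finsetSum, Polynomial.eval_monomial, smul_eq_mul,
      ContinuousMultilinearMap.map_smul_univ, Finset.prod_const, Finset.card_univ, Fintype.card_fin]
    exact Finset.sum_congr rfl fun l _ ↦ by ring
  refine ⟨P, Nat.lt_succ_of_le (Polynomial.natDegree_sum_le_of_forall_le _ _ fun l hl ↦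
    (Polynomial.natDegree_monomial_le _).trans (Nat.lt_succ_iff.1 (Finset.mem_range.1 hl))), ?_, ?_⟩
  · simp [hP, Polynomial.coeff_monomial]
  intro t ht
  have hmem (τ : ℝ) (hτ : τ ∈ Set.Icc (0 : ℝ) 1) : y + τ • t • w ∈ Ω := by
    rw [smul_smul]
    exact hseg _ ⟨mul_nonneg hτ.1 ht.1, mul_le_one₀ hτ.2 ht.1 ht.2⟩
  calc ‖a (y + t • w) - P.eval t‖
      ≤ ε * ‖t • w‖ ^ (n + 1) := by
        rw [heval]
        exact ha.norm_map_add_sub_sum_iteratedFDeriv_le hmem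
    _ ≤ ε * ‖w‖ ^ (n + 1) := by
        gcongr
        · exact (norm_nonneg _).trans (ha _ (hmem 0 ⟨le_rfl, zero_le_one⟩)).2
        · rw [norm_smul, Real.norm_of_nonneg ht.1]
          exact mul_le_of_le_one_left (norm_nonneg w) ht.2

theorem exists_polynomial_norm_sub_eval_le_of_sub_eval {ι : Type*} [Fintype ι]
    {Ω : Set (EuclideanSpace ℝ ι)} {b : EuclideanSpace ℝ ι → ℝ} {p : MvPolynomial ι ℝ}
    (hk : k ≠ 0) (hp : p.totalDegree ≤ k)
    (hb : HasIteratedFDerivBoundOn k ε (fun x ↦ b x - MvPolynomial.eval x.ofLp p) Ω)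
    {y w : EuclideanSpace ℝ ι} (hseg : ∀ t ∈ Set.Icc (0 : ℝ) 1, y + t • w ∈ Ω) :
    ∃ Q : Polynomial ℝ, Q.natDegree ≤ k ∧
      Q.coeff k = MvPolynomial.eval w.ofLp (MvPolynomial.homogeneousComponent k p) ∧
      ∀ t ∈ Set.Icc (0 : ℝ) 1, ‖b (y + t • w) - Q.eval t‖ ≤ ε * ‖w‖ ^ k := by
  obtain ⟨P, hPk, -, hP⟩ := hb.exists_polynomial_norm_sub_eval_le hk hseg
  refine ⟨P + lineRestriction p y.ofLp w.ofLp, ?_, ?_, fun t ht ↦ ?_⟩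
  · exact Polynomial.natDegree_add_le_of_degree_le hPk.le (natDegree_lineRestriction_le hp _ _)
  · rw [Polynomial.coeff_add, Polynomial.coeff_eq_zero_of_natDegree_lt hPk, zero_add,
      coeff_lineRestriction hp]
  · convert hP t ht using 2
    rw [Polynomial.eval_add, eval_lineRestriction, WithLp.ofLp_add, WithLp.ofLp_smul]
    ring

end HasIteratedFDerivBoundOn

end Taylor

section LocalEstimate

open scoped NNReal ENNReal

theorem analyticOnNhd_eval_ofLp {ι : Type*} [Fintype ι] (q : MvPolynomial ι ℝ) :
    AnalyticOnNhd ℝ (fun x : EuclideanSpace ℝ ι ↦ MvPolynomial.eval x.ofLp q) Set.univ :=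
  AnalyticOnNhd.eval_continuousLinearMap (EuclideanSpace.equiv ι ℝ).toContinuousLinearMap q

theorem exists_isOpen_forall_le_norm_eval {ι : Type*} [Fintype ι] {q : MvPolynomial ι ℝ}
    (hq : q ≠ 0) :
    ∃ U ⊆ ball (0 : EuclideanSpace ℝ ι) 1, IsOpen U ∧ U.Nonempty ∧ ∃ η : ℝ, 0 < η ∧
      ∀ w ∈ U, η ≤ ‖MvPolynomial.eval w.ofLp q‖ := by
  have hanalytic := analyticOnNhd_eval_ofLp q
  obtain ⟨w₀, hw₀, hne⟩ : ∃ w₀ ∈ ball (0 : EuclideanSpace ℝ ι) 1,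
      MvPolynomial.eval w₀.ofLp q ≠ 0 := by
    by_contra! hzero
    have := hanalytic.eq_of_eventuallyEq (g := fun _ ↦ 0) analyticOnNhd_const
      (Filter.eventually_of_mem (ball_mem_nhds 0 one_pos) hzero)
    exact hq (MvPolynomial.funext fun x ↦ by simpa using congrFun this (WithLp.toLp 2 x))
  have hcont : Continuous fun x : EuclideanSpace ℝ ι ↦ ‖MvPolynomial.eval x.ofLp q‖ :=
    (continuousOn_univ.1 hanalytic.continuousOn).norm
  have hpos := norm_pos_iff.2 hne
  exact ⟨ball 0 1 ∩ {x | ‖MvPolynomial.eval w₀.ofLp q‖ / 2 < ‖MvPolynomial.eval x.ofLp q‖},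
    Set.inter_subset_left, isOpen_ball.inter (isOpen_lt continuous_const hcont),
    ⟨w₀, hw₀, half_lt_self hpos⟩, _, half_pos hpos, fun w hw ↦ hw.2.le⟩

section Scaling

variable {J E : Type*} [NormedAddCommGroup E] [NormedSpace ℝ E]
  [FiniteDimensional ℝ E] [MeasurableSpace E] [BorelSpace E] (μ : Measure E)
  [μ.IsAddHaarMeasure] {τ : J → ℝ}

theorem measure_preimage_add_smul {s : ℝ} (hs : 0 < s) (y : E) (L : Set E) :
    μ ((fun w ↦ y + s • w) ⁻¹' L) = ENNReal.ofReal (s ^ Module.finrank ℝ E)⁻¹ * μ L := by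
  have hpre : (fun w ↦ y + s • w) ⁻¹' L = (s • ·) ⁻¹' ((y + ·) ⁻¹' L) := rfl
  rw [hpre, Measure.addHaar_preimage_smul μ hs.ne', measure_preimage_add,
    abs_of_pos (by positivity)]

theorem ofReal_pow_finrank_mul_measure_le [Fintype J] (hτ : ∀ j, 0 < τ j) {y : E} {r : ℝ}
    (hr : 0 < r) {U L : Set E} (hUL : ∀ w ∈ U, ∃ j, y + τ j • r • w ∈ L) :
    ENNReal.ofReal (r ^ Module.finrank ℝ E) * μ U ≤
      (∑ j, ENNReal.ofReal (τ j ^ Module.finrank ℝ E)⁻¹) * μ L := by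
  set n := Module.finrank ℝ E
  have hrn : 0 < r ^ n := by positivity
  have measure_preimage (j : J) : ENNReal.ofReal (r ^ n) *
      μ ((fun w ↦ y + (τ j * r) • w) ⁻¹' L) = ENNReal.ofReal (τ j ^ n)⁻¹ * μ L := by
    rw [measure_preimage_add_smul μ (mul_pos (hτ j) hr), ← mul_assoc,
      ← ENNReal.ofReal_mul hrn.le, mul_pow, mul_inv, mul_left_comm, mul_inv_cancel₀ hrn.ne',
      mul_one]
  calc ENNReal.ofReal (r ^ n) * μ U
      ≤ ENNReal.ofReal (r ^ n) * μ (⋃ j, (fun w ↦ y + (τ j * r) • w) ⁻¹' L) := by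
        gcongr
        intro w hw
        simpa only [Set.mem_iUnion, Set.mem_preimage, mul_smul] using hUL w hw
    _ ≤ ENNReal.ofReal (r ^ n) * ∑ j, μ ((fun w ↦ y + (τ j * r) • w) ⁻¹' L) := by
        gcongr
        exact measure_iUnion_fintype_le _ _
    _ = (∑ j, ENNReal.ofReal (τ j ^ n)⁻¹) * μ L := by
        rw [Finset.mul_sum, Finset.sum_mul]
        exact Finset.sum_congr rfl fun j _ ↦ measure_preimage j

theorem exists_forall_measure_closedBall_le_mul_of_smul_mem [Finite J] (hτ : ∀ j, 0 < τ j)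
    {U : Set E} (hU₀ : μ U ≠ 0) (hU : μ U ≠ ∞) {R : ℝ} (hR : 0 ≤ R) :
    ∃ M : ℝ≥0, ∀ {y : E} {r : ℝ} {L : Set E}, 0 < r → (∀ w ∈ U, ∃ j, y + τ j • r • w ∈ L) →
      μ (closedBall y (R * r)) ≤ M * μ L := by
  cases nonempty_fintype J
  set n := Module.finrank ℝ E
  set S : ℝ≥0∞ := ∑ j, ENNReal.ofReal (τ j ^ n)⁻¹
  set M : ℝ≥0∞ := ENNReal.ofReal (R ^ n) * μ (closedBall 0 1) * (μ U)⁻¹ * S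
  have hS : S ≠ ∞ := ENNReal.sum_ne_top.2 fun j _ ↦ ENNReal.ofReal_ne_top
  have hM : M ≠ ∞ := ENNReal.mul_ne_top (ENNReal.mul_ne_top (ENNReal.mul_ne_top
    ENNReal.ofReal_ne_top measure_closedBall_lt_top.ne) (ENNReal.inv_ne_top.2 hU₀)) hS
  refine ⟨M.toNNReal, fun {y r L} hr hUL ↦ ?_⟩
  rw [ENNReal.coe_toNNReal hM]
  calc μ (closedBall y (R * r))
      = ENNReal.ofReal (R ^ n) * ENNReal.ofReal (r ^ n) * μ (closedBall 0 1) := by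
        rw [Measure.addHaar_closedBall' μ y (by positivity), mul_pow,
          ENNReal.ofReal_mul (by positivity)]
    _ = ENNReal.ofReal (R ^ n) * μ (closedBall 0 1) * (μ U)⁻¹ *
          (ENNReal.ofReal (r ^ n) * μ U) := by
        rw [mul_comm (ENNReal.ofReal (r ^ n)) (μ U), ← mul_assoc, mul_assoc _ (μ U)⁻¹ (μ U),
          ENNReal.inv_mul_cancel hU₀ hU]
        ring
    _ ≤ ENNReal.ofReal (R ^ n) * μ (closedBall 0 1) * (μ U)⁻¹ * (S * μ L) := by
        gcongr _ * ?_
        exact ofReal_pow_finrank_mul_measure_le μ hτ hr hUL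
    _ = M * μ L := by rw [← mul_assoc]

end Scaling

section Density

variable {ι F : Type*} [Fintype ι] [NormedAddCommGroup F] [NormedSpace ℝ F]

theorem exists_pos_forall_exists_node_mul_pow_le {J : Type*} [Fintype J]
    {τ : J → ℝ} (hτ : Function.Injective τ) (hτI : ∀ j, τ j ∈ Set.Icc (0 : ℝ) 1) {k : ℕ}
    (hk : k ≠ 0) (hJ : 2 * k < Fintype.card J) {η : ℝ} (hη : 0 < η) {p : MvPolynomial ι ℝ}
    (hp : p.totalDegree ≤ k) :
    ∃ c : ℝ, 0 < c ∧ ∀ {Ω : Set (EuclideanSpace ℝ ι)} {a : EuclideanSpace ℝ ι → F}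
      {b : EuclideanSpace ℝ ι → ℝ} {y w : EuclideanSpace ℝ ι} {r : ℝ},
      HasIteratedFDerivBoundOn k c a Ω →
      HasIteratedFDerivBoundOn k c (fun x ↦ b x - MvPolynomial.eval x.ofLp p) Ω →
      (∀ t ∈ Set.Icc (0 : ℝ) 1, y + t • w ∈ Ω) → ‖w‖ ≤ r → r ^ k ≤ ‖a y‖ →
      η * r ^ k ≤ ‖MvPolynomial.eval w.ofLp (MvPolynomial.homogeneousComponent k p)‖ →
      ∃ j, c * r ^ k ≤ ‖a (y + τ j • w)‖ ∧ c * r ^ k ≤ ‖b (y + τ j • w)‖ := by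
  obtain ⟨c₀, hc₀, hnode⟩ :=
    exists_pos_forall_exists_mul_norm_coeff_le_norm_eval_pair hτ hJ 0 k
  set c := min (c₀ / 2) (c₀ * η / 2)
  have hc : 0 < c := by positivity
  have hcc₀ : c ≤ c₀ / 2 := min_le_left _ _
  have hcη : c ≤ c₀ * η / 2 := min_le_right _ _
  refine ⟨c, hc, fun {Ω a b y w r} ha hb hseg hw hay hpw ↦ ?_⟩
  -- A norming functional of `a y` reduces the vector-valued `a` to a scalar function.
  obtain ⟨L, hL, hLy⟩ := exists_dual_vector'' ℝ (a y)
  obtain ⟨P, hPk, hP₀, hP⟩ := (ha.clm_comp hL).exists_polynomial_norm_sub_eval_le hk hseg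
  obtain ⟨Q, hQk, hQ₀, hQ⟩ := hb.exists_polynomial_norm_sub_eval_le_of_sub_eval hk hp hseg
  obtain ⟨j, hPj, hQj⟩ := hnode P Q hPk.le hQk
  have herr : c * ‖w‖ ^ k ≤ c * r ^ k := by gcongr
  have hrk : 0 ≤ r ^ k := pow_nonneg ((norm_nonneg w).trans hw) k
  have hcoeffP : c₀ * r ^ k ≤ c₀ * ‖P.coeff 0‖ := by
    gcongr
    simpa [hP₀, hLy] using hay
  have hcoeffQ : c₀ * (η * r ^ k) ≤ c₀ * ‖Q.coeff k‖ := by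
    gcongr
    rwa [hQ₀]
  refine ⟨j, ?_, ?_⟩
  · have hLa := L.le_of_opNorm_le hL (a (y + τ j • w))
    have hPa := norm_le_norm_add_norm_sub (L (a (y + τ j • w))) (P.eval (τ j))
    have := hP (τ j) (hτI j)
    simp only [Function.comp_apply] at this
    nlinarith
  · have hQb := norm_le_norm_add_norm_sub (b (y + τ j • w)) (Q.eval (τ j))
    have := hQ (τ j) (hτI j)
    nlinarith

theorem exists_forall_volume_closedBall_le_mul_volume {p : MvPolynomial ι ℝ} (hp : p ≠ 0)
    (hk : p.totalDegree ≠ 0) :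
    ∃ c : ℝ, 0 < c ∧ ∃ M : ℝ≥0, ∀ {Ω : Set (EuclideanSpace ℝ ι)} {a : EuclideanSpace ℝ ι → F}
      {b : EuclideanSpace ℝ ι → ℝ} {y : EuclideanSpace ℝ ι} {r : ℝ},
      HasIteratedFDerivBoundOn p.totalDegree c a Ω →
      HasIteratedFDerivBoundOn p.totalDegree c (fun x ↦ b x - MvPolynomial.eval x.ofLp p) Ω →
      0 < r → closedBall y r ⊆ Ω → r ^ p.totalDegree ≤ ‖a y‖ →
      volume (closedBall y (3 * r)) ≤
        M * volume {x ∈ closedBall y r | c * r ^ p.totalDegree ≤ min ‖a x‖ ‖b x‖} := by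
  set k := p.totalDegree
  obtain ⟨U, hU, hUopen, hUne, η, hη, hqU⟩ :=
    exists_isOpen_forall_le_norm_eval (homogeneousComponent_totalDegree_ne_zero hp)
  let τ := (Set.Ioc_infinite (zero_lt_one' ℝ)).natEmbedding
  have hτ : Function.Injective fun j : Fin (2 * k + 1) ↦ (τ j : ℝ) :=
    Subtype.val_injective.comp (τ.injective.comp Fin.val_injective)
  have hτI (j : ℕ) : (τ j : ℝ) ∈ Set.Icc 0 1 := Set.Ioc_subset_Icc_self (τ j).2
  obtain ⟨c, hc, hnode⟩ := exists_pos_forall_exists_node_mul_pow_le (F := F) hτ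
    (fun j ↦ hτI j) hk (by simp) hη (p := p) le_rfl
  obtain ⟨M, hM⟩ := exists_forall_measure_closedBall_le_mul_of_smul_mem volume
    (fun j : Fin (2 * k + 1) ↦ (τ j).2.1) (hUopen.measure_pos volume hUne).ne'
    (measure_ball_lt_top.trans_le' (measure_mono hU)).ne zero_le_three
  refine ⟨c, hc, M, fun {Ω a b y r} ha hb hr hΩ hay ↦ hM hr fun w hw ↦ ?_⟩
  have hwr : ‖r • w‖ ≤ r := by
    rw [norm_smul, Real.norm_of_nonneg hr.le]
    exact mul_le_of_le_one_right hr.le (mem_ball_zero_iff.1 (hU hw)).le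
  have hmem (t : ℝ) (ht : t ∈ Set.Icc (0 : ℝ) 1) : y + t • r • w ∈ closedBall y r := by
    rw [mem_closedBall, dist_self_add_left, norm_smul, Real.norm_of_nonneg ht.1]
    exact (mul_le_of_le_one_left (norm_nonneg _) ht.2).trans hwr
  have hlead : η * r ^ k ≤
      ‖MvPolynomial.eval (r • w).ofLp (MvPolynomial.homogeneousComponent k p)‖ := by
    rw [WithLp.ofLp_smul, eval_smul_of_isHomogeneous
      (MvPolynomial.homogeneousComponent_isHomogeneous k p), norm_mul, norm_pow,
      Real.norm_of_nonneg hr.le, mul_comm]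
    gcongr
    exact hqU w hw
  obtain ⟨j, hja, hjb⟩ := hnode ha hb (fun t ht ↦ hΩ (hmem t ht)) hwr hay hlead
  exact ⟨j, hmem _ (hτI j), le_min hja hjb⟩

end Density

end LocalEstimate

section Covering

open scoped NNReal ENNReal

theorem setLIntegral_le_mul_of_closedBall {α : Type*} [PseudoMetricSpace α]
    [TopologicalSpace.SeparableSpace α] [MeasurableSpace α] [OpensMeasurableSpace α]
    {μ : Measure α} {A Ω : Set α} {r : α → ℝ} {δ : ℝ} {f g φ : α → ℝ≥0∞} {K : ℝ≥0∞}
    (hr : ∀ x ∈ A, 0 < r x) (hrδ : ∀ x ∈ A, r x ≤ δ) (hΩ : ∀ x ∈ A, closedBall x (r x) ⊆ Ω)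
    (hfφ : ∀ x ∈ A, ∀ y ∈ A, r x ≤ 2 * r y → f x ≤ φ y)
    (hφg : ∀ y ∈ A, φ y * μ (closedBall y (3 * r y)) ≤ K * ∫⁻ x in closedBall y (r y), g x ∂μ) :
    ∫⁻ x in A, f x ∂μ ≤ K * ∫⁻ x in Ω, g x ∂μ := by
  obtain ⟨u, huA, hdisj, hcover⟩ := Vitali.exists_disjoint_subfamily_covering_enlargement
    (fun x ↦ closedBall x (r x)) A r 2 one_lt_two (fun x hx ↦ (hr x hx).le) δ hrδ
    fun x hx ↦ nonempty_closedBall.2 (hr x hx).le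
  have hu : u.Countable := hdisj.countable_of_nonempty_interior fun y hy ↦
    ⟨y, ball_subset_interior_closedBall (mem_ball_self (hr y (huA hy)))⟩
  have := hu.to_subtype
  set T : u → Set α := fun y ↦ {x ∈ A | x ∈ closedBall (y : α) (3 * r y) ∧ r x ≤ 2 * r y}
  have hAT : A ⊆ ⋃ y, T y := fun x hx ↦ by
    obtain ⟨y, hy, ⟨z, hzx, hzy⟩, hxy⟩ := hcover x hx
    have hdist : dist x y ≤ 3 * r y := by
      linarith [dist_triangle_left x y z, mem_closedBall.1 hzx, mem_closedBall.1 hzy]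
    exact Set.mem_iUnion.2 ⟨⟨y, hy⟩, hx, hdist, hxy⟩
  have setLIntegral_T_le (y : u) :
      ∫⁻ x in T y, f x ∂μ ≤ K * ∫⁻ x in closedBall y (r y), g x ∂μ :=
    calc ∫⁻ x in T y, f x ∂μ ≤ ∫⁻ _ in T y, φ y ∂μ :=
          setLIntegral_mono measurable_const fun x hx ↦ hfφ x hx.1 y (huA y.2) hx.2.2
      _ = φ y * μ (T y) := setLIntegral_const _ _
      _ ≤ φ y * μ (closedBall y (3 * r y)) := by gcongr; exact fun x hx ↦ hx.2.1
      _ ≤ K * ∫⁻ x in closedBall y (r y), g x ∂μ := hφg y (huA y.2)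
  calc ∫⁻ x in A, f x ∂μ ≤ ∫⁻ x in ⋃ y, T y, f x ∂μ := lintegral_mono_set hAT
    _ ≤ ∑' y, ∫⁻ x in T y, f x ∂μ := lintegral_iUnion_le T f
    _ ≤ ∑' y : u, K * ∫⁻ x in closedBall y (r y), g x ∂μ := ENNReal.tsum_le_tsum setLIntegral_T_le
    _ = K * ∫⁻ x in ⋃ y ∈ u, closedBall y (r y), g x ∂μ := by
        rw [ENNReal.tsum_mul_left, lintegral_biUnion hu (fun _ _ ↦ measurableSet_closedBall) hdisj]
    _ ≤ K * ∫⁻ x in Ω, g x ∂μ := by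
        gcongr
        exact Set.iUnion₂_subset fun y hy ↦ hΩ y (huA hy)

end Covering

section TwoValued

open scoped NNReal ENNReal

theorem setLIntegral_enorm_pow_le_of_totalDegree_eq_zero {ι F : Type*} [Fintype ι]
    [NormedAddCommGroup F] {p : MvPolynomial ι ℝ} (hk : p.totalDegree = 0) (s : ℕ)
    {A Ω : Set (EuclideanSpace ℝ ι)} (hA : MeasurableSet A) (hAΩ : A ⊆ Ω)
    {a : EuclideanSpace ℝ ι → F} {b : EuclideanSpace ℝ ι → ℝ}
    (ha : ∀ x ∈ A, ‖a x‖ ≤ ‖p.coeff 0‖ / 2)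
    (hb : ∀ x ∈ A, ‖b x - MvPolynomial.eval x.ofLp p‖ ≤ ‖p.coeff 0‖ / 2) :
    ∫⁻ x in A, ‖a x‖ₑ ^ s ≤ ∫⁻ x in Ω, min ‖a x‖ₑ ‖b x‖ₑ ^ s := by
  have hpc := MvPolynomial.totalDegree_eq_zero_iff_eq_C.1 hk
  refine (setLIntegral_mono' hA fun x hx ↦ ?_).trans (lintegral_mono_set hAΩ)
  have hab : ‖a x‖ ≤ ‖b x‖ := by
    have heval : MvPolynomial.eval x.ofLp p = p.coeff 0 := by rw [hpc]; simp
    have hbx := hb x hx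
    rw [heval, norm_sub_rev] at hbx
    linarith [ha x hx, norm_le_norm_add_norm_sub' (p.coeff 0) (b x)]
  rw [min_eq_left (enorm_le_iff_norm_le.2 hab)]

variable {ι F : Type*} [Fintype ι] [NormedAddCommGroup F] [NormedSpace ℝ F]
  {p : MvPolynomial ι ℝ}

theorem aemeasurable_min_enorm_pow {k : ℕ} {ε : ℝ} {Ω S : Set (EuclideanSpace ℝ ι)}
    {a : EuclideanSpace ℝ ι → F} {b : EuclideanSpace ℝ ι → ℝ}
    (ha : HasIteratedFDerivBoundOn k ε a Ω)
    (hb : HasIteratedFDerivBoundOn k ε (fun x ↦ b x - MvPolynomial.eval x.ofLp p) Ω)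
    (hS : MeasurableSet S) (hSΩ : S ⊆ Ω) (s : ℕ) :
    AEMeasurable (fun x ↦ min ‖a x‖ₑ ‖b x‖ₑ ^ s) (volume.restrict S) := by
  have hacont : ContinuousOn a S := fun x hx ↦ (ha x (hSΩ hx)).1.continuousAt.continuousWithinAt
  have hbcont : ContinuousOn b S := fun x hx ↦ by
    have hsum := (hb x (hSΩ hx)).1.continuousAt.add
      (analyticOnNhd_eval_ofLp p x trivial).continuousAt
    simpa only [Pi.add_def, sub_add_cancel] using hsum.continuousWithinAt (s := S)
  exact ((hacont.enorm.aemeasurable hS).min (hbcont.enorm.aemeasurable hS)).pow_const s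

theorem exists_forall_enorm_pow_mul_volume_closedBall_le (hp : p ≠ 0) (hk : p.totalDegree ≠ 0)
    (s : ℕ) :
    ∃ ε : ℝ, 0 < ε ∧ ∃ M : ℝ≥0, ∀ {Ω : Set (EuclideanSpace ℝ ι)} {a : EuclideanSpace ℝ ι → F}
      {b : EuclideanSpace ℝ ι → ℝ} {y : EuclideanSpace ℝ ι} {r : ℝ},
      HasIteratedFDerivBoundOn p.totalDegree ε a Ω →
      HasIteratedFDerivBoundOn p.totalDegree ε (fun x ↦ b x - MvPolynomial.eval x.ofLp p) Ω →
      0 < r → closedBall y r ⊆ Ω → r ^ p.totalDegree = ‖a y‖ →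
      ‖a y‖ₑ ^ s * volume (closedBall y (3 * r)) ≤
        M * ∫⁻ x in closedBall y r, min ‖a x‖ₑ ‖b x‖ₑ ^ s := by
  obtain ⟨c, hc, M, hM⟩ := exists_forall_volume_closedBall_le_mul_volume (F := F) hp hk
  refine ⟨c, hc, M * (c⁻¹.toNNReal) ^ s, fun {Ω a b y r} ha hb hr hΩ hry ↦ ?_⟩
  have hdensity := hM ha hb hr hΩ hry.le
  rw [hry] at hdensity
  set L : Set (EuclideanSpace ℝ ι) := {x ∈ closedBall y r | c * ‖a y‖ ≤ min ‖a x‖ ‖b x‖}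
  have hL (x) (hx : x ∈ L) : (ENNReal.ofReal c * ‖a y‖ₑ) ^ s ≤ min ‖a x‖ₑ ‖b x‖ₑ ^ s := by
    rw [← ofReal_norm (a y), ← ENNReal.ofReal_mul hc.le, ← ofReal_norm (a x), ← ofReal_norm (b x)]
    gcongr
    exact le_min (ENNReal.ofReal_le_ofReal (hx.2.trans (min_le_left _ _)))
      (ENNReal.ofReal_le_ofReal (hx.2.trans (min_le_right _ _)))
  have markov : (ENNReal.ofReal c * ‖a y‖ₑ) ^ s * volume L ≤
      ∫⁻ x in closedBall y r, min ‖a x‖ₑ ‖b x‖ₑ ^ s := by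
    refine le_trans ?_ (mul_meas_ge_le_lintegral₀
      (aemeasurable_min_enorm_pow ha hb measurableSet_closedBall hΩ s)
      ((ENNReal.ofReal c * ‖a y‖ₑ) ^ s))
    rw [Measure.restrict_apply' measurableSet_closedBall]
    gcongr
    exact fun x hx ↦ ⟨hL x hx, hx.1⟩
  calc ‖a y‖ₑ ^ s * volume (closedBall y (3 * r))
      ≤ ‖a y‖ₑ ^ s * (M * volume L) := by gcongr
    _ = M * (c⁻¹.toNNReal) ^ s * ((ENNReal.ofReal c * ‖a y‖ₑ) ^ s * volume L) := by
        have hcancel : (c⁻¹.toNNReal : ℝ≥0∞) * ENNReal.ofReal c = 1 := by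
          rw [← ENNReal.ofReal, ← ENNReal.ofReal_mul (by positivity), inv_mul_cancel₀ hc.ne',
            ENNReal.ofReal_one]
        calc ‖a y‖ₑ ^ s * (M * volume L)
            = M * 1 ^ s * (‖a y‖ₑ ^ s * volume L) := by ring
          _ = _ := by rw [← hcancel]; ring
    _ ≤ _ := by
        push_cast
        gcongr

theorem exists_forall_setLIntegral_enorm_pow_le_of_totalDegree_ne_zero (hp : p ≠ 0)
    (hk : p.totalDegree ≠ 0) {s : ℕ} (hs : s ≠ 0) {δ : ℝ} (hδ : 0 < δ) :
    ∃ ε : ℝ, 0 < ε ∧ ∃ C : ℝ≥0, ∀ {A Ω : Set (EuclideanSpace ℝ ι)}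
      {a : EuclideanSpace ℝ ι → F} {b : EuclideanSpace ℝ ι → ℝ},
      (∀ y ∈ A, closedBall y δ ⊆ Ω) → (∀ y ∈ A, ‖a y‖ ≤ ε) →
      HasIteratedFDerivBoundOn p.totalDegree ε a Ω →
      HasIteratedFDerivBoundOn p.totalDegree ε (fun x ↦ b x - MvPolynomial.eval x.ofLp p) Ω →
      ∫⁻ x in A, ‖a x‖ₑ ^ s ≤ C * ∫⁻ x in Ω, min ‖a x‖ₑ ‖b x‖ₑ ^ s := by
  set k := p.totalDegree
  obtain ⟨ε, hε, M, hM⟩ := exists_forall_enorm_pow_mul_volume_closedBall_le (F := F) hp hk s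
  refine ⟨min ε (δ ^ k), by positivity, 2 ^ (k * s) * M, fun {A Ω a b} hΩ haε ha hb ↦ ?_⟩
  -- The zero scale of `a`: Taylor's theorem compares `a` with polynomials on the ball of radius
  -- `r y` around `y`.
  set r : EuclideanSpace ℝ ι → ℝ := fun x ↦ ‖a x‖ ^ (k⁻¹ : ℝ)
  have hrk (x) : r x ^ k = ‖a x‖ := Real.rpow_inv_natCast_pow (norm_nonneg _) hk
  have hrδ (x) (hx : x ∈ A) : r x ≤ δ := by
    refine le_of_pow_le_pow_left₀ hk hδ.le ?_
    exact (hrk x).trans_le ((haε x hx).trans (min_le_right _ _))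
  have growth (x y) (hxy : r x ≤ 2 * r y) : ‖a x‖ₑ ^ s ≤ 2 ^ (k * s) * ‖a y‖ₑ ^ s := by
    have hnorm : ‖a x‖ ≤ 2 ^ k * ‖a y‖ := by
      rw [← hrk x, ← hrk y, ← mul_pow]
      gcongr
    rw [pow_mul, ← mul_pow, ← ofReal_norm, ← ofReal_norm, ← ENNReal.ofReal_ofNat,
      ← ENNReal.ofReal_pow zero_le_two, ← ENNReal.ofReal_mul (by positivity)]
    gcongr
  set A' := A \ {x | a x = 0}
  have hr (x) (hx : x ∈ A') : 0 < r x := Real.rpow_pos_of_pos (norm_pos_iff.2 hx.2) _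
  have hball (y) (hy : y ∈ A') : closedBall y (r y) ⊆ Ω :=
    (closedBall_subset_closedBall (hrδ y hy.1)).trans (hΩ y hy.1)
  have hzero : ∫⁻ x in A ∩ {x | a x = 0}, ‖a x‖ₑ ^ s ≤ 0 := by
    simpa using setLIntegral_mono (g := 0) measurable_const
      fun x (hx : x ∈ A ∩ {x | a x = 0}) ↦ by simp [show a x = 0 from hx.2, hs]
  calc ∫⁻ x in A, ‖a x‖ₑ ^ s
      ≤ ∫⁻ x in A', ‖a x‖ₑ ^ s := by
        rw [← Set.sdiff_union_inter A {x | a x = 0}]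
        exact (lintegral_union_le _ _ _).trans (add_le_of_le_of_nonpos le_rfl hzero)
    _ ≤ _ := by
        refine setLIntegral_le_mul_of_closedBall (φ := fun y ↦ 2 ^ (k * s) * ‖a y‖ₑ ^ s) hr
          (fun x hx ↦ hrδ x hx.1) hball (fun x _ y _ ↦ growth x y) fun y hy ↦ ?_
        push_cast
        rw [mul_assoc, mul_assoc]
        gcongr _ * ?_
        exact hM (ha.mono_bound (min_le_left _ _)) (hb.mono_bound (min_le_left _ _)) (hr y hy)
          (hball y hy) (hrk y)

theorem exists_forall_setLIntegral_enorm_pow_le (hp : p ≠ 0) {s : ℕ} (hs : s ≠ 0) {δ : ℝ}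
    (hδ : 0 < δ) :
    ∃ ε : ℝ, 0 < ε ∧ ∃ C : ℝ≥0, ∀ {A Ω : Set (EuclideanSpace ℝ ι)}
      {a : EuclideanSpace ℝ ι → F} {b : EuclideanSpace ℝ ι → ℝ}, MeasurableSet A →
      (∀ y ∈ A, closedBall y δ ⊆ Ω) → (∀ y ∈ A, ‖a y‖ ≤ ε) →
      HasIteratedFDerivBoundOn p.totalDegree ε a Ω →
      HasIteratedFDerivBoundOn p.totalDegree ε (fun x ↦ b x - MvPolynomial.eval x.ofLp p) Ω →
      ∫⁻ x in A, ‖a x‖ₑ ^ s ≤ C * ∫⁻ x in Ω, min ‖a x‖ₑ ‖b x‖ₑ ^ s := by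
  by_cases hk : p.totalDegree = 0
  · have hp₀ : p.coeff 0 ≠ 0 := fun h ↦ hp <| by
      rw [MvPolynomial.totalDegree_eq_zero_iff_eq_C.1 hk, h, map_zero]
    refine ⟨‖p.coeff 0‖ / 2, half_pos (norm_pos_iff.2 hp₀), 1,
      fun {A Ω a b} hA hΩ haε _ hb ↦ ?_⟩
    have hAΩ : A ⊆ Ω := fun y hy ↦ hΩ y hy (mem_closedBall_self hδ.le)
    rw [ENNReal.coe_one, one_mul]
    refine setLIntegral_enorm_pow_le_of_totalDegree_eq_zero hk s hA hAΩ haε fun x hx ↦ ?_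
    have hbx := (hb x (hAΩ hx)).2
    rwa [hk, norm_iteratedFDeriv_zero] at hbx
  · obtain ⟨ε, hε, C, hC⟩ :=
      exists_forall_setLIntegral_enorm_pow_le_of_totalDegree_ne_zero (F := F) hp hk hs hδ
    exact ⟨ε, hε, C, fun _ ↦ hC⟩

end TwoValued

section UnorderedPairs

open scoped NNReal ENNReal

theorem setIntegral_norm_pow_le_of_setLIntegral_enorm_pow_le {α F : Type*} [MeasurableSpace α]
    {μ : Measure α} [NormedAddCommGroup F] {A Ω : Set α} {f g : α → F} {C : ℝ≥0} {s : ℕ}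
    (hf : AEStronglyMeasurable f (μ.restrict Ω)) (hg : AEStronglyMeasurable g (μ.restrict Ω))
    (hfΩ : IntegrableOn (fun x ↦ ‖f x‖ ^ s) Ω μ) (hA : A ⊆ Ω)
    (h : ∫⁻ x in A, ‖f x‖ₑ ^ s ∂μ ≤ C * ∫⁻ x in Ω, min ‖f x‖ₑ ‖g x‖ₑ ^ s ∂μ) :
    ∫ x in A, ‖f x‖ ^ s ∂μ ≤ C * ∫ x in Ω, min ‖f x‖ ‖g x‖ ^ s ∂μ := by
  have hmin_nonneg (x) : 0 ≤ min ‖f x‖ ‖g x‖ := le_min (norm_nonneg _) (norm_nonneg _)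
  have hminΩ : IntegrableOn (fun x ↦ min ‖f x‖ ‖g x‖ ^ s) Ω μ := by
    refine Integrable.mono hfΩ ((hf.norm.inf hg.norm).pow s) (ae_of_all _ fun x ↦ ?_)
    rw [Real.norm_of_nonneg (pow_nonneg (hmin_nonneg x) s), norm_pow, norm_norm]
    exact pow_le_pow_left₀ (hmin_nonneg x) (min_le_left _ _) s
  have hofReal (x) :
      ENNReal.ofReal (min ‖f x‖ ‖g x‖ ^ s) = min ‖f x‖ₑ ‖g x‖ₑ ^ s := by
    rw [ENNReal.ofReal_pow (hmin_nonneg x), ENNReal.ofReal_min, ofReal_norm, ofReal_norm]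
  have hrhs : 0 ≤ C * ∫ x in Ω, min ‖f x‖ ‖g x‖ ^ s ∂μ :=
    mul_nonneg C.coe_nonneg (integral_nonneg fun x ↦ pow_nonneg (hmin_nonneg x) s)
  rw [← ENNReal.ofReal_le_ofReal_iff hrhs, ENNReal.ofReal_mul C.coe_nonneg,
    ENNReal.ofReal_coe_nnreal,
    ofReal_integral_eq_lintegral_ofReal (hfΩ.mono_set hA) (ae_of_all _ fun x ↦ by positivity),
    ofReal_integral_eq_lintegral_ofReal hminΩ
      (ae_of_all _ fun x ↦ pow_nonneg (hmin_nonneg x) s)]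
  simpa only [hofReal, ENNReal.ofReal_pow (norm_nonneg _), ofReal_norm] using h

theorem integrableOn_norm_pow_of_norm_le {α F : Type*} [MeasurableSpace α] {μ : Measure α}
    [NormedAddCommGroup F] {Ω : Set α} (hΩ : MeasurableSet Ω) (hμΩ : μ Ω < ∞) {f : α → F} {R : ℝ}
    (hf : AEStronglyMeasurable f (μ.restrict Ω)) (hR : ∀ x ∈ Ω, ‖f x‖ ≤ R) (s : ℕ) :
    IntegrableOn (fun x ↦ ‖f x‖ ^ s) Ω μ := by
  refine IntegrableOn.of_bound hμΩ (hf.norm.pow s) (R ^ s) ?_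
  filter_upwards [ae_restrict_mem hΩ] with x hx
  rw [norm_pow, norm_norm]
  exact pow_le_pow_left₀ (norm_nonneg _) (hR x hx) s

theorem exists_forall_setLIntegral_enorm_sub_pow_le {ι κ : Type*} [Fintype ι] [Fintype κ]
    {p : MvPolynomial ι ℝ} (hp : p ≠ 0) {ψ : EuclideanSpace ℝ ι → EuclideanSpace ℝ κ} {i : κ}
    (hψ : ∀ x, ψ x i = MvPolynomial.eval x.ofLp p) {s : ℕ} (hs : s ≠ 0) {δ : ℝ} (hδ : 0 < δ) :
    ∃ ε : ℝ, 0 < ε ∧ ∃ C : ℝ≥0, ∀ {A Ω : Set (EuclideanSpace ℝ ι)}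
      {u v : EuclideanSpace ℝ ι → EuclideanSpace ℝ κ} {ε₁ ε₂ : ℝ}, MeasurableSet A →
      (∀ y ∈ A, closedBall y δ ⊆ Ω) → (∀ y ∈ A, ‖u y - v y‖ ≤ ε) → ε₁ + ε₂ ≤ ε →
      HasIteratedFDerivBoundOn p.totalDegree ε₁ (u - ψ) Ω →
      HasIteratedFDerivBoundOn p.totalDegree ε₂ (v - ψ) Ω →
      ∫⁻ x in A, ‖u x - v x‖ₑ ^ s ≤ C * ∫⁻ x in Ω, min ‖u x - v x‖ₑ ‖u x + v x‖ₑ ^ s := by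
  obtain ⟨ε, hε, C, hC⟩ :=
    exists_forall_setLIntegral_enorm_pow_le (F := EuclideanSpace ℝ κ) hp hs hδ
  refine ⟨ε, hε, C, fun {A Ω u v ε₁ ε₂} hA hΩ huv hε₁₂ hu hv ↦ ?_⟩
  set L : EuclideanSpace ℝ κ →L[ℝ] ℝ := (2⁻¹ : ℝ) • EuclideanSpace.proj i
  have hL (z) : ‖L z‖ ≤ 1 * ‖z‖ := by
    have hz : ‖z i‖ ≤ ‖z‖ := PiLp.norm_apply_le z i
    have hLz : ‖L z‖ = 2⁻¹ * ‖z i‖ := by simp [L]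
    linarith [norm_nonneg z]
  have hdiff : HasIteratedFDerivBoundOn p.totalDegree ε (u - v) Ω := by
    have h := (hu.sub hv).mono_bound hε₁₂
    rwa [sub_sub_sub_cancel_right] at h
  have hmean : HasIteratedFDerivBoundOn p.totalDegree ε
      (fun x ↦ L (u x + v x) - MvPolynomial.eval x.ofLp p) Ω := by
    convert ((hu.add hv).mono_bound hε₁₂).clm_comp (L.opNorm_le_bound zero_le_one hL) using 2 with x
    simp only [L, ← hψ, Function.comp_apply, Pi.add_apply, Pi.sub_apply, smul_apply,
      EuclideanSpace.proj, PiLp.proj_apply, PiLp.add_apply, PiLp.sub_apply, smul_eq_mul]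
    ring
  refine (hC hA hΩ huv hdiff hmean).trans ?_
  gcongr with x
  exact enorm_le_iff_norm_le.2 ((hL _).trans_eq (one_mul _))

end UnorderedPairs

section CdNorm

variable {n m d : ℕ} {w : EuclideanSpace ℝ (Fin n) → EuclideanSpace ℝ (Fin m)}

theorem norm_iteratedFDerivWithin_le_CdNorm
    (hw : ∀ j ≤ d, BddAbove ((fun x ↦ ‖iteratedFDerivWithin ℝ j w (ball 0 1) x‖) '' ball 0 1))
    {j : ℕ} (hj : j ≤ d) {x : EuclideanSpace ℝ (Fin n)} (hx : x ∈ ball 0 1) :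
    ‖iteratedFDerivWithin ℝ j w (ball 0 1) x‖ ≤ CdNorm n m d w := by
  have hsup : ‖iteratedFDerivWithin ℝ j w (ball 0 1) x‖ ≤
      ⨆ x ∈ ball (0 : EuclideanSpace ℝ (Fin n)) 1, ‖iteratedFDerivWithin ℝ j w (ball 0 1) x‖ := by
    have hbdd : BddAbove (Set.range fun y ↦ ⨆ _ : y ∈ ball (0 : EuclideanSpace ℝ (Fin n)) 1,
        ‖iteratedFDerivWithin ℝ j w (ball 0 1) y‖) := by
      obtain ⟨M, hM⟩ := hw j hj
      have hMx := hM (Set.mem_image_of_mem _ hx)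
      refine ⟨M, Set.forall_mem_range.2 fun y ↦ Real.iSup_le (fun hy ↦ ?_) ?_⟩
      · exact hM (Set.mem_image_of_mem _ hy)
      · exact (norm_nonneg _).trans hMx
    simpa only [ciSup_pos hx] using le_ciSup hbdd x
  refine hsup.trans (Finset.single_le_sum (f := fun j ↦
    ⨆ x ∈ ball (0 : EuclideanSpace ℝ (Fin n)) 1, ‖iteratedFDerivWithin ℝ j w (ball 0 1) x‖)
    (fun l _ ↦ ?_) (Finset.mem_range_succ_iff.2 hj))
  exact Real.iSup_nonneg fun _ ↦ Real.iSup_nonneg fun _ ↦ norm_nonneg _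

theorem norm_le_CdNorm
    (hw : ∀ j ≤ d, BddAbove ((fun x ↦ ‖iteratedFDerivWithin ℝ j w (ball 0 1) x‖) '' ball 0 1))
    {x : EuclideanSpace ℝ (Fin n)} (hx : x ∈ ball 0 1) : ‖w x‖ ≤ CdNorm n m d w := by
  simpa only [norm_iteratedFDerivWithin_zero] using
    norm_iteratedFDerivWithin_le_CdNorm hw d.zero_le hx

theorem hasIteratedFDerivBoundOn_CdNorm (hwd : ContDiffOn ℝ d w (ball 0 1))
    (hw : ∀ j ≤ d, BddAbove ((fun x ↦ ‖iteratedFDerivWithin ℝ j w (ball 0 1) x‖) '' ball 0 1))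
    {k : ℕ} (hk : k ≤ d) : HasIteratedFDerivBoundOn k (CdNorm n m d w) w (ball 0 1) := fun x hx ↦ by
  refine ⟨(hwd.contDiffAt (isOpen_ball.mem_nhds hx)).of_le (mod_cast hk), ?_⟩
  rw [← iteratedFDerivWithin_of_isOpen k isOpen_ball hx]
  exact norm_iteratedFDerivWithin_le_CdNorm hw hk hx

end CdNorm

theorem contDiff_of_forall_apply_eq_eval {ι κ : Type*} [Fintype ι] [Fintype κ] {r : WithTop ℕ∞}
    {ψ : EuclideanSpace ℝ ι → EuclideanSpace ℝ κ} {p : κ → MvPolynomial ι ℝ}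
    (hψ : ∀ x i, ψ x i = MvPolynomial.eval x.ofLp (p i)) : ContDiff ℝ r ψ := by
  refine contDiff_euclidean.2 fun i ↦ ?_
  simp only [hψ]
  exact (analyticOnNhd_eval_ofLp (p i)).contDiff

/-- two-valued `L²` comparison estimate near a nonzero polynomial. -/
theorem stmt_0 (n m : ℕ) (hn : 1 ≤ n) (hm : 1 ≤ m) (γ : ℝ) (hγ : γ ∈ Set.Ioo (0 : ℝ) 1)
    (d : ℕ) (ψ : EuclideanSpace ℝ (Fin n) → EuclideanSpace ℝ (Fin m))
    (hψpoly : ∃ p : Fin m → MvPolynomial (Fin n) ℝ,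
      (∀ i, (p i).totalDegree ≤ d) ∧
      ∀ (x : EuclideanSpace ℝ (Fin n)) (i : Fin m),
        ψ x i = MvPolynomial.eval (fun j => x j) (p i))
    (hψne : ψ ≠ 0) :
    ∃ ε : ℝ, 0 < ε ∧ ∃ C : ℝ, 0 < C ∧
      ∀ u v : EuclideanSpace ℝ (Fin n) → EuclideanSpace ℝ (Fin m),
        ContDiffOn ℝ (d : ℕ∞) u (ball 0 1) → ContDiffOn ℝ (d : ℕ∞) v (ball 0 1) →
        (∀ j ≤ d, BddAbove
          ((fun x => ‖iteratedFDerivWithin ℝ j (u - ψ) (ball 0 1) x‖) ''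
            ball (0 : EuclideanSpace ℝ (Fin n)) 1)) →
        (∀ j ≤ d, BddAbove
          ((fun x => ‖iteratedFDerivWithin ℝ j (v - ψ) (ball 0 1) x‖) ''
            ball (0 : EuclideanSpace ℝ (Fin n)) 1)) →
        CdNorm n m d (u - ψ) + CdNorm n m d (v - ψ) < ε →
        (∫ x in ball (0 : EuclideanSpace ℝ (Fin n)) γ, ‖u x - v x‖ ^ 2) ≤
          C * ∫ x in ball (0 : EuclideanSpace ℝ (Fin n)) 1,
            (min ‖u x - v x‖ ‖u x + v x‖) ^ 2 := by
  obtain ⟨p, hpd, hψ⟩ := hψpoly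
  obtain ⟨i, hpi⟩ : ∃ i, p i ≠ 0 := by
    by_contra! h
    exact hψne (by ext x i; simp [hψ, h])
  have hball (y) (hy : y ∈ ball (0 : EuclideanSpace ℝ (Fin n)) γ) :
      closedBall y ((1 - γ) / 2) ⊆ ball 0 1 :=
    closedBall_subset_ball' (by linarith [mem_ball.1 hy, hγ.2])
  obtain ⟨ε, hε, C, hC⟩ := exists_forall_setLIntegral_enorm_sub_pow_le hpi (fun x ↦ hψ x i)
    two_ne_zero (half_pos (sub_pos.2 hγ.2))
  refine ⟨ε, hε, C + 1, by positivity, fun u v hu hv hubdd hvbdd hlt ↦ ?_⟩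
  have hψd : ContDiffOn ℝ d ψ (ball 0 1) := (contDiff_of_forall_apply_eq_eval hψ).contDiffOn
  have huv (x) (hx : x ∈ ball 0 1) : ‖u x - v x‖ ≤ ε := by
    rw [← sub_sub_sub_cancel_right _ _ (ψ x)]
    exact (norm_sub_le_of_le (norm_le_CdNorm hubdd hx) (norm_le_CdNorm hvbdd hx)).trans hlt.le
  have hlintegral := hC measurableSet_ball hball
    (fun x hx ↦ huv x (ball_subset_ball hγ.2.le hx)) hlt.le
    (hasIteratedFDerivBoundOn_CdNorm (hu.sub hψd) hubdd (hpd i))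
    (hasIteratedFDerivBoundOn_CdNorm (hv.sub hψd) hvbdd (hpd i))
  have hsub := (hu.sub hv).continuousOn.aestronglyMeasurable measurableSet_ball (μ := volume)
  have hadd := (hu.add hv).continuousOn.aestronglyMeasurable measurableSet_ball (μ := volume)
  refine (setIntegral_norm_pow_le_of_setLIntegral_enorm_pow_le hsub hadd
    (integrableOn_norm_pow_of_norm_le measurableSet_ball measure_ball_lt_top hsub huv 2)
    (ball_subset_ball hγ.2.le) hlintegral).trans ?_
  gcongr
  exact le_add_of_nonneg_right zero_le_one
end

section
/- Let f : ℝ → ℝ and g : ℝ² → ℝ be smooth functions with f(0) = 0 and g(0) = 0. Then for every multi-index α = (α₁, α₂) with |α| ≥ 1, D^α(f ∘ g)(0) = Σ_{k=1}^{|α|} (1/k!) f^{(k)}(0) D^α(g^k)(0), where g^k denotes the pointwise k-th power of g and D^α = ∂^{α₁}_{x₁}∂^{α₂}_{x₂}. -/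
noncomputable section

/-- Directional derivative operator on `ℝ × ℝ`. -/
def pd2 (v : ℝ × ℝ) (f : ℝ × ℝ → ℝ) : ℝ × ℝ → ℝ := fun x => fderiv ℝ f x v

/-- `D^α = ∂^{a}_{x₁} ∂^{b}_{x₂}` for the multi-index `α = (a, b)`. -/
def Dxy (a b : ℕ) (h : ℝ × ℝ → ℝ) : ℝ × ℝ → ℝ :=
  (pd2 ((1 : ℝ), (0 : ℝ)))^[a] ((pd2 ((0 : ℝ), (1 : ℝ)))^[b] h)

end

/-!
The derivatives of `f ∘ g` at `x` up to order `n` depend on `f` only through its derivatives at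
`g x` up to order `n`. Hence `f` may be replaced by its Taylor polynomial of degree `n` at `g x`,
for which the formula is the linearity of the `n`-th derivative.
-/

open Filter Topology
open scoped Nat

section IteratedDerivatives

variable {𝕜 E F G : Type*} [NontriviallyNormedField 𝕜]
  [NormedAddCommGroup E] [NormedSpace 𝕜 E] [NormedAddCommGroup F] [NormedSpace 𝕜 F]
  [NormedAddCommGroup G] [NormedSpace 𝕜 G]

theorem iteratedFDeriv_comp_congr_left {f₁ f₂ : F → G} {g : E → F} {x : E} {n : ℕ}
    (hf₁ : ContDiffAt 𝕜 n f₁ (g x)) (hf₂ : ContDiffAt 𝕜 n f₂ (g x)) (hg : ContDiffAt 𝕜 n g x)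
    (h : ∀ k ≤ n, iteratedFDeriv 𝕜 k f₁ (g x) = iteratedFDeriv 𝕜 k f₂ (g x)) :
    iteratedFDeriv 𝕜 n (f₁ ∘ g) x = iteratedFDeriv 𝕜 n (f₂ ∘ g) x := by
  rw [iteratedFDeriv_comp hf₁ hg le_rfl, iteratedFDeriv_comp hf₂ hg le_rfl]
  ext v
  simp only [FormalMultilinearSeries.taylorComp, sum_apply,
    FormalMultilinearSeries.compAlongOrderedFinpartition_apply, ftaylorSeries]
  exact Finset.sum_congr rfl fun c _ => by rw [h c.length c.length_le]

theorem fderiv_iteratedFDeriv_apply {h : E → F} {x : E} {n : ℕ}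
    (hh : ContDiffAt 𝕜 (n + 1 : ℕ) h x) (v : Fin n → E) (w : E) :
    fderiv 𝕜 (fun y => iteratedFDeriv 𝕜 n h y v) x w =
      iteratedFDeriv 𝕜 (n + 1) h x (Fin.cons w v) := by
  have hdiff : DifferentiableAt 𝕜 (iteratedFDeriv 𝕜 n h) x :=
    hh.differentiableAt_iteratedFDeriv (by exact_mod_cast n.lt_succ_self)
  rw [iteratedFDeriv_succ_apply_left, Fin.cons_zero, Fin.tail_cons,
    fderiv_continuousMultilinear_apply_const_apply hdiff]

theorem iteratedDeriv_sub_const_pow_self (c : 𝕜) (j k : ℕ) :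
    iteratedDeriv j (fun t => (t - c) ^ k) c = if j = k then (k ! : 𝕜) else 0 := by
  simp only [iteratedDeriv_comp_sub_const j (fun t : 𝕜 => t ^ k), iteratedDeriv_pow]
  rcases lt_trichotomy j k with hlt | rfl | hgt
  · simp [hlt.ne, Nat.sub_ne_zero_of_lt hlt]
  · simp [Nat.descFactorial_self]
  · simp [hgt.ne', Nat.descFactorial_of_lt hgt]

theorem iteratedDeriv_sum_sub_const_pow_smul_self (c : 𝕜) (u : ℕ → F) {j n : ℕ} (hj : j ≤ n) :
    iteratedDeriv j (fun t => ∑ k ∈ Finset.range (n + 1), (t - c) ^ k • u k) c =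
      (j ! : 𝕜) • u j := by
  have hterm (k : ℕ) : iteratedDeriv j (fun t => (t - c) ^ k • u k) c =
      if j = k then (k ! : 𝕜) • u k else 0 := by
    rw [iteratedDeriv_smul_const (by fun_prop), iteratedDeriv_sub_const_pow_self, ite_smul,
      zero_smul]
  rw [iteratedDeriv_fun_sum fun k _ => by fun_prop]
  simp [hterm, hj]

theorem iteratedFDeriv_comp_apply_eq_sum [CharZero 𝕜] {f : 𝕜 → F} {g : E → 𝕜} {x : E} {n : ℕ}
    (hf : ContDiffAt 𝕜 n f (g x)) (hg : ContDiffAt 𝕜 n g x) (v : Fin n → E) :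
    iteratedFDeriv 𝕜 n (f ∘ g) x v =
      ∑ k ∈ Finset.range (n + 1),
        iteratedFDeriv 𝕜 n (fun y => (g y - g x) ^ k) x v •
          (k ! : 𝕜)⁻¹ • iteratedDeriv k f (g x) := by
  let taylorCoeff (k : ℕ) : F := (k ! : 𝕜)⁻¹ • iteratedDeriv k f (g x)
  let taylorPoly (t : 𝕜) : F := ∑ k ∈ Finset.range (n + 1), (t - g x) ^ k • taylorCoeff k
  have htaylor (j : ℕ) (hj : j ≤ n) :
      iteratedFDeriv 𝕜 j f (g x) = iteratedFDeriv 𝕜 j taylorPoly (g x) := by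
    have hderiv : iteratedDeriv j taylorPoly (g x) = iteratedDeriv j f (g x) := by
      rw [iteratedDeriv_sum_sub_const_pow_smul_self _ _ hj,
        smul_inv_smul₀ (Nat.cast_ne_zero.2 j.factorial_ne_zero)]
    ext
    simp only [iteratedFDeriv_apply_eq_iteratedDeriv_mul_prod, hderiv]
  have hpow (k : ℕ) : ContDiffAt 𝕜 n (fun y => (g y - g x) ^ k) x := by fun_prop
  rw [iteratedFDeriv_comp_congr_left hf (by fun_prop) hg htaylor]
  simp only [taylorPoly, Function.comp_def]
  rw [iteratedFDeriv_fun_sum_apply fun k _ => by fun_prop,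
    sum_apply]
  exact Finset.sum_congr rfl fun k _ => by rw [iteratedFDeriv_smul_const_apply (hpow k)]; rfl

end IteratedDerivatives

theorem pd2_apply_of_eventually_eq_iteratedFDeriv {u h : ℝ × ℝ → ℝ} {x : ℝ × ℝ} {n : ℕ}
    {v : Fin n → ℝ × ℝ} (hh : ContDiffAt ℝ (n + 1 : ℕ) h x)
    (hu : ∀ᶠ y in 𝓝 x, u y = iteratedFDeriv ℝ n h y v) (w : ℝ × ℝ) :
    pd2 w u x = iteratedFDeriv ℝ (n + 1) h x (Fin.cons w v) := by
  rw [pd2, EventuallyEq.fderiv_eq hu, fderiv_iteratedFDeriv_apply hh]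

theorem iterate_pd2_apply_eq_iteratedFDeriv (w : ℝ × ℝ) (b : ℕ) {h : ℝ × ℝ → ℝ} {x : ℝ × ℝ}
    (hh : ContDiffAt ℝ b h x) :
    (pd2 w)^[b] h x = iteratedFDeriv ℝ b h x fun _ => w := by
  induction b generalizing x with
  | zero => simp
  | succ b ih =>
    have hev : ∀ᶠ y in 𝓝 x, (pd2 w)^[b] h y = iteratedFDeriv ℝ b h y fun _ => w :=
      (hh.eventually (ENat.natCast_ne_coe_top _)).mono fun y hy => ih (hy.of_le (by simp))
    rw [Function.iterate_succ_apply', pd2_apply_of_eventually_eq_iteratedFDeriv hh hev]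
    congr 1
    ext i : 1
    cases i using Fin.cases <;> rfl

-- The order is written `b + a` so that `b + (a + 1)` unfolds to `(b + a) + 1` in the types.
theorem Dxy_apply_eq_iteratedFDeriv (a b : ℕ) {h : ℝ × ℝ → ℝ} {x : ℝ × ℝ}
    (hh : ContDiffAt ℝ (b + a : ℕ) h x) :
    Dxy a b h x =
      iteratedFDeriv ℝ (b + a) h x fun i => if (i : ℕ) < a then (1, 0) else (0, 1) := by
  induction a generalizing x with
  | zero => simpa [Dxy] using iterate_pd2_apply_eq_iteratedFDeriv (0, 1) b hh
  | succ a ih =>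
    have hev : ∀ᶠ y in 𝓝 x, Dxy a b h y =
        iteratedFDeriv ℝ (b + a) h y fun i => if (i : ℕ) < a then (1, 0) else (0, 1) :=
      (hh.eventually (ENat.natCast_ne_coe_top _)).mono fun y hy =>
        ih (hy.of_le (by simp [← add_assoc]))
    have hsucc : Dxy (a + 1) b h x = pd2 (1, 0) (Dxy a b h) x :=
      congrFun (Function.iterate_succ_apply' _ _ _) x
    rw [hsucc, pd2_apply_of_eventually_eq_iteratedFDeriv hh hev]
    congr 1
    ext i : 1
    cases i using Fin.cases <;> simp

theorem stmt_10_general {f : ℝ → ℝ} {g : ℝ × ℝ → ℝ} {x : ℝ × ℝ} {a b : ℕ}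
    (hf : ContDiffAt ℝ (a + b : ℕ) f (g x)) (hg : ContDiffAt ℝ (a + b : ℕ) g x) :
    Dxy a b (fun X => f (g X)) x =
      ∑ k ∈ Finset.range (a + b + 1),
        (1 / (k ! : ℝ)) * iteratedDeriv k f (g x) * Dxy a b (fun X => (g X - g x) ^ k) x := by
  rw [add_comm a b] at hf hg ⊢
  rw [Dxy_apply_eq_iteratedFDeriv a b (h := fun X => f (g X)) (hf.comp x hg)]
  refine (iteratedFDeriv_comp_apply_eq_sum hf hg _).trans (Finset.sum_congr rfl fun k _ => ?_)
  rw [Dxy_apply_eq_iteratedFDeriv a b (by fun_prop), smul_eq_mul, smul_eq_mul, one_div, mul_comm]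

/-- Faà di Bruno formula at the origin, in the form used in the
majorant argument. -/
theorem stmt_10 (f : ℝ → ℝ) (g : ℝ × ℝ → ℝ) (hf : ContDiff ℝ (⊤ : ℕ∞) f)
    (hg : ContDiff ℝ (⊤ : ℕ∞) g) (hf0 : f 0 = 0) (hg0 : g 0 = 0) :
    ∀ a b : ℕ, 1 ≤ a + b →
      Dxy a b (fun X => f (g X)) 0 =
        ∑ k ∈ Finset.Icc 1 (a + b),
          (1 / (Nat.factorial k : ℝ)) * iteratedDeriv k f 0 *
            Dxy a b (fun X => g X ^ k) 0 := by
  intro a b _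
  have hsum := stmt_10_general (x := 0) (contDiff_infty.1 hf (a + b)).contDiffAt
    (contDiff_infty.1 hg (a + b)).contDiffAt
  rw [Finset.range_eq_Ico, Finset.sum_eq_sum_Ico_succ_bot (Nat.succ_pos _)] at hsum
  simpa [hf0, hg0, Finset.Ico_add_one_right_eq_Icc] using hsum
end

section
/- Let N ≥ 2 be an integer and let H₀ ≥ 1 and H ≥ 2 be real numbers. Define the polynomial v(ζ) = H₀ ζ + Σ_{k=2}^{N} (H₀ H^{k−2}/(k−1)²) ζ^k. Then for all integers k, j with 1 ≤ k < j ≤ N, (1/j!) (d^j/dζ^j)(v(ζ)^k)|_{ζ=0} ≤ 6^{k−1} H₀^k H^{j−k−1} / (j−k)². -/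
/-!
Write `v(ζ) = H₀ ζ w(ζ)`, so that `w` has constant term `1` and its coefficient of `ζ ^ (n + 1)` is
at most `H ^ n / (n + 1) ^ 2`. Multiplying a series with this kind of bound (up to a factor `A ≥ 1`)
by `w` yields two boundary terms and a convolution of inverse squares. The latter is at most
`6 / (n + 2) ^ 2` and loses one power of `H`, so each multiplication multiplies `A` by at most
`2 + 6 / H`, which is at most `6` for `H ≥ 2`.
-/

open Finset

section Convolution

variable {𝕜 : Type*} [Field 𝕜] [LinearOrder 𝕜] [IsStrictOrderedRing 𝕜]

theorem sum_range_inv_add_one_sq_le_two (n : ℕ) : ∑ i ∈ range n, (((i : 𝕜) + 1) ^ 2)⁻¹ ≤ 2 := by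
  have reindex : ∑ i ∈ range n, (((i : 𝕜) + 1) ^ 2)⁻¹ = ∑ i ∈ Ioo 0 (n + 1), ((i : 𝕜) ^ 2)⁻¹ := by
    rw [← Ico_add_one_left_eq_Ioo, sum_Ico_eq_sum_range]
    simp [add_comm]
  simpa [reindex] using sum_Ioo_inv_sq_le (α := 𝕜) 0 (n + 1)

theorem sum_range_inv_add_one_le_half (n : ℕ) :
    ∑ i ∈ range n, ((i : 𝕜) + 1)⁻¹ ≤ ((n : 𝕜) + 1) / 2 := by
  induction n with
  | zero => simp
  | succ n ih =>
    rcases n.eq_zero_or_pos with rfl | hn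
    · norm_num
    · have two_le : (2 : 𝕜) ≤ (n : 𝕜) + 1 := by exact_mod_cast Nat.succ_le_succ hn
      have inv_le : ((n : 𝕜) + 1)⁻¹ ≤ 2⁻¹ := inv_anti₀ two_pos two_le
      rw [sum_range_succ]
      push_cast
      linarith

theorem sum_antidiagonal_fst_add_snd {M : Type*} [AddCommMonoid M] (f : ℕ → M) (n : ℕ) :
    ∑ p ∈ antidiagonal n, (f p.1 + f p.2) = 2 • ∑ i ∈ range (n + 1), f i := by
  have sum_fst : ∑ p ∈ antidiagonal n, f p.1 = ∑ i ∈ range (n + 1), f i :=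
    Nat.sum_antidiagonal_eq_sum_range_succ (fun i _ ↦ f i) n
  have sum_snd : ∑ p ∈ antidiagonal n, f p.2 = ∑ p ∈ antidiagonal n, f p.1 :=
    Nat.sum_antidiagonal_swap (f := fun p ↦ f p.1)
  rw [sum_add_distrib, sum_snd, sum_fst, two_nsmul]

theorem inv_sq_mul_inv_sq_eq {K : Type*} [Field K] {x y : K} (hx : x ≠ 0) (hy : y ≠ 0)
    (hxy : x + y ≠ 0) :
    (x ^ 2)⁻¹ * (y ^ 2)⁻¹ =
      ((x + y) ^ 2)⁻¹ * ((x ^ 2)⁻¹ + (y ^ 2)⁻¹ + 2 / (x + y) * (x⁻¹ + y⁻¹)) := by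
  field_simp
  ring

-- The constant is `6 = 2 * 2 + 2`: twice the bound `2` for the sum of inverse squares, plus the
-- cross terms of the partial fractions, controlled by the harmonic sum.
theorem sum_antidiagonal_inv_sq_mul_inv_sq_le (n : ℕ) :
    ∑ p ∈ antidiagonal n, (((p.1 : 𝕜) + 1) ^ 2)⁻¹ * (((p.2 : 𝕜) + 1) ^ 2)⁻¹ ≤
      6 / ((n : 𝕜) + 2) ^ 2 := by
  have split_term : ∀ p ∈ antidiagonal n,
      (((p.1 : 𝕜) + 1) ^ 2)⁻¹ * (((p.2 : 𝕜) + 1) ^ 2)⁻¹ =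
        (((n : 𝕜) + 2) ^ 2)⁻¹ * (((((p.1 : 𝕜) + 1) ^ 2)⁻¹ + (((p.2 : 𝕜) + 1) ^ 2)⁻¹) +
          2 / ((n : 𝕜) + 2) * (((p.1 : 𝕜) + 1)⁻¹ + ((p.2 : 𝕜) + 1)⁻¹)) := by
    intro p hp
    have add_eq : (n : 𝕜) + 2 = ((p.1 : 𝕜) + 1) + ((p.2 : 𝕜) + 1) := by
      rw [← mem_antidiagonal.mp hp]
      push_cast
      ring
    rw [add_eq]
    exact inv_sq_mul_inv_sq_eq (by positivity) (by positivity) (by positivity)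
  have squares_le := sum_range_inv_add_one_sq_le_two (𝕜 := 𝕜) (n + 1)
  have harmonic_le := sum_range_inv_add_one_le_half (𝕜 := 𝕜) (n + 1)
  calc ∑ p ∈ antidiagonal n, (((p.1 : 𝕜) + 1) ^ 2)⁻¹ * (((p.2 : 𝕜) + 1) ^ 2)⁻¹
      = (((n : 𝕜) + 2) ^ 2)⁻¹ * (2 • ∑ i ∈ range (n + 1), (((i : 𝕜) + 1) ^ 2)⁻¹ +
          2 / ((n : 𝕜) + 2) * (2 • ∑ i ∈ range (n + 1), ((i : 𝕜) + 1)⁻¹)) := by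
        rw [sum_congr rfl split_term, ← mul_sum, sum_add_distrib, ← mul_sum,
          sum_antidiagonal_fst_add_snd (fun i ↦ (((i : 𝕜) + 1) ^ 2)⁻¹),
          sum_antidiagonal_fst_add_snd (fun i ↦ ((i : 𝕜) + 1)⁻¹)]
    _ ≤ (((n : 𝕜) + 2) ^ 2)⁻¹ *
          (2 • 2 + 2 / ((n : 𝕜) + 2) * (2 • ((((n + 1 : ℕ) : 𝕜) + 1) / 2))) := by gcongr
    _ = 6 / ((n : 𝕜) + 2) ^ 2 := by
        push_cast
        simp only [nsmul_eq_mul]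
        field_simp
        ring

end Convolution

section Domination

open PowerSeries

theorem coeff_add_two_mul_of_coeff_zero_eq_one {R : Type*} [CommSemiring R] {v w : R⟦X⟧}
    (hv : coeff 0 v = 1) (hw : coeff 0 w = 1) (n : ℕ) :
    coeff (n + 2) (v * w) = coeff (n + 2) v + coeff (n + 2) w +
      ∑ p ∈ antidiagonal n, coeff (p.1 + 1) v * coeff (p.2 + 1) w := by
  rw [coeff_mul, Nat.sum_antidiagonal_succ, Nat.sum_antidiagonal_succ', hv, hw]
  ring

/-- The power series `w` has constant term `1`, and its higher coefficients are nonnegative and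
dominated by `A * H ^ n / (n + 1) ^ 2` in degree `n + 1`. This is the class of series in which the
powers of `v(ζ) / (H₀ ζ)` are estimated. -/
structure InvSqDominated {𝕜 : Type*} [Field 𝕜] [LinearOrder 𝕜] (H A : 𝕜) (w : 𝕜⟦X⟧) : Prop where
  coeff_zero : coeff 0 w = 1
  coeff_nonneg : ∀ n, 0 ≤ coeff n w
  coeff_succ_le : ∀ n : ℕ, coeff (n + 1) w ≤ A * (H ^ n / ((n : 𝕜) + 1) ^ 2)

namespace InvSqDominated

variable {𝕜 : Type*} [Field 𝕜] [LinearOrder 𝕜] {H A B : 𝕜} {v w : 𝕜⟦X⟧}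

theorem bound_nonneg (hw : InvSqDominated H A w) : 0 ≤ A := by
  simpa using (hw.coeff_nonneg 1).trans (hw.coeff_succ_le 0)

variable [IsStrictOrderedRing 𝕜]

theorem mono (hH : 0 ≤ H) (hw : InvSqDominated H A w) (hAB : A ≤ B) : InvSqDominated H B w where
  coeff_zero := hw.coeff_zero
  coeff_nonneg := hw.coeff_nonneg
  coeff_succ_le n := (hw.coeff_succ_le n).trans (by gcongr)

theorem sum_antidiagonal_coeff_succ_mul_le (hH : 0 < H) (hv : InvSqDominated H A v)
    (hw : InvSqDominated H B w) (n : ℕ) :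
    ∑ p ∈ antidiagonal n, coeff (p.1 + 1) v * coeff (p.2 + 1) w ≤
      6 * A * B / H * (H ^ (n + 1) / ((n : 𝕜) + 2) ^ 2) := by
  have hA := hv.bound_nonneg
  have hB := hw.bound_nonneg
  calc ∑ p ∈ antidiagonal n, coeff (p.1 + 1) v * coeff (p.2 + 1) w
      ≤ ∑ p ∈ antidiagonal n, (A * (H ^ p.1 / ((p.1 : 𝕜) + 1) ^ 2)) *
          (B * (H ^ p.2 / ((p.2 : 𝕜) + 1) ^ 2)) := by
        gcongr with p
        · exact hw.coeff_nonneg _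
        · exact hv.coeff_succ_le _
        · exact hw.coeff_succ_le _
    _ = A * B * H ^ n *
          ∑ p ∈ antidiagonal n, (((p.1 : 𝕜) + 1) ^ 2)⁻¹ * (((p.2 : 𝕜) + 1) ^ 2)⁻¹ := by
        rw [mul_sum]
        refine sum_congr rfl fun p hp ↦ ?_
        rw [← mem_antidiagonal.mp hp]
        ring
    _ ≤ A * B * H ^ n * (6 / ((n : 𝕜) + 2) ^ 2) := by
        gcongr
        exact sum_antidiagonal_inv_sq_mul_inv_sq_le n
    _ = 6 * A * B / H * (H ^ (n + 1) / ((n : 𝕜) + 2) ^ 2) := by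
        field_simp
        ring

theorem mul (hH : 0 < H) (hv : InvSqDominated H A v) (hw : InvSqDominated H B w) :
    InvSqDominated H (A + B + 6 * A * B / H) (v * w) where
  coeff_zero := by simp [coeff_mul, hv.coeff_zero, hw.coeff_zero]
  coeff_nonneg n := by
    rw [coeff_mul]
    exact sum_nonneg fun p _ ↦ mul_nonneg (hv.coeff_nonneg _) (hw.coeff_nonneg _)
  coeff_succ_le
    | 0 => by
      have hA := hv.bound_nonneg
      have hB := hw.bound_nonneg
      have hAB : 0 ≤ 6 * A * B / H := by positivity
      have v_le : coeff 1 v ≤ A := by simpa using hv.coeff_succ_le 0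
      have w_le : coeff 1 w ≤ B := by simpa using hw.coeff_succ_le 0
      have coeff_one_mul : coeff 1 (v * w) = coeff 1 w + coeff 1 v := by
        simp [coeff_mul, Nat.sum_antidiagonal_succ, hv.coeff_zero, hw.coeff_zero]
      simp only [zero_add, coeff_one_mul, pow_zero, Nat.cast_zero, one_pow, div_one, mul_one]
      linarith
    | n + 1 => by
      have cast_eq : ((n + 1 : ℕ) : 𝕜) + 1 = (n : 𝕜) + 2 := by push_cast; ring
      have v_le := hv.coeff_succ_le (n + 1)
      have w_le := hw.coeff_succ_le (n + 1)
      rw [cast_eq] at v_le w_le ⊢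
      rw [coeff_add_two_mul_of_coeff_zero_eq_one hv.coeff_zero hw.coeff_zero, add_mul, add_mul]
      gcongr
      exact sum_antidiagonal_coeff_succ_mul_le hH hv hw n

theorem pow_succ (hH : 0 < H) (hw : InvSqDominated H 1 w) (k : ℕ) :
    InvSqDominated H ((2 + 6 / H) ^ k) (w ^ (k + 1)) := by
  induction k with
  | zero => simpa using hw
  | succ k ih =>
    have one_le : 1 ≤ (2 + 6 / H) ^ k :=
      one_le_pow₀ (by linarith [show 0 ≤ 6 / H by positivity])
    rw [_root_.pow_succ w]
    refine (ih.mul hH hw).mono hH.le ?_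
    calc (2 + 6 / H) ^ k + 1 + 6 * (2 + 6 / H) ^ k * 1 / H
        ≤ (2 + 6 / H) ^ k + (2 + 6 / H) ^ k + 6 * (2 + 6 / H) ^ k * 1 / H := by gcongr
      _ = (2 + 6 / H) ^ (k + 1) := by ring

end InvSqDominated

end Domination

section Majorant

open Polynomial

variable {𝕜 : Type*} [Field 𝕜]

/-- The polynomial `v(ζ) / (H₀ ζ) = 1 + ∑_{i=2}^N H ^ (i - 2) / (i - 1) ^ 2 * ζ ^ (i - 1)`, with
the summation index shifted by two. -/
noncomputable def majorantQuotient (H : 𝕜) (N : ℕ) : 𝕜[X] :=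
  1 + ∑ i ∈ range (N - 1), C (H ^ i / ((i : 𝕜) + 1) ^ 2) * X ^ (i + 1)

theorem eval_C_mul_majorantQuotient_mul_X (H₀ H ζ : 𝕜) (N : ℕ) :
    (C H₀ * (majorantQuotient H N * X)).eval ζ =
      H₀ * ζ + ∑ i ∈ Icc 2 N, H₀ * H ^ (i - 2) / ((i : 𝕜) - 1) ^ 2 * ζ ^ i := by
  have shift_index : ∑ i ∈ Icc 2 N, H₀ * H ^ (i - 2) / ((i : 𝕜) - 1) ^ 2 * ζ ^ i =
      ∑ i ∈ range (N - 1), H₀ * H ^ i / ((i : 𝕜) + 1) ^ 2 * ζ ^ (i + 2) := by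
    rw [← Ico_add_one_right_eq_Icc, sum_Ico_eq_sum_range]
    refine sum_congr rfl fun i _ ↦ ?_
    have cast_eq : ((2 + i : ℕ) : 𝕜) - 1 = (i : 𝕜) + 1 := by push_cast; ring
    rw [cast_eq, Nat.add_sub_cancel_left, add_comm 2 i]
  simp only [majorantQuotient, eval_mul, eval_C, eval_add, eval_one, eval_finsetSum, eval_pow,
    eval_X]
  rw [shift_index, add_mul, one_mul, mul_add, sum_mul, mul_sum]
  congr 1
  exact sum_congr rfl fun i _ ↦ by ring

theorem coeff_zero_majorantQuotient (H : 𝕜) (N : ℕ) :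
    (majorantQuotient H N).coeff 0 = 1 := by
  simp [majorantQuotient, finsetSum_coeff]

theorem coeff_succ_majorantQuotient (H : 𝕜) (N n : ℕ) :
    (majorantQuotient H N).coeff (n + 1) =
      if n < N - 1 then H ^ n / ((n : 𝕜) + 1) ^ 2 else 0 := by
  simp [majorantQuotient, finsetSum_coeff, coeff_X_pow, coeff_one]

variable [LinearOrder 𝕜] [IsStrictOrderedRing 𝕜] {H : 𝕜}

theorem invSqDominated_majorantQuotient (hH : 0 ≤ H) (N : ℕ) :
    InvSqDominated H 1 (majorantQuotient H N : PowerSeries 𝕜) where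
  coeff_zero := by rw [coeff_coe, coeff_zero_majorantQuotient]
  coeff_nonneg
    | 0 => by rw [coeff_coe, coeff_zero_majorantQuotient]; exact zero_le_one
    | n + 1 => by rw [coeff_coe, coeff_succ_majorantQuotient]; split_ifs <;> positivity
  coeff_succ_le n := by
    rw [coeff_coe, coeff_succ_majorantQuotient, one_mul]
    split_ifs
    · exact le_rfl
    · positivity

theorem coeff_majorantQuotient_pow_succ_le (hH : 0 < H) (N k m : ℕ) :
    (majorantQuotient H N ^ (k + 1)).coeff (m + 1) ≤
      (2 + 6 / H) ^ k * (H ^ m / ((m : 𝕜) + 1) ^ 2) := by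
  rw [← coeff_coe, Polynomial.coe_pow]
  exact ((invSqDominated_majorantQuotient hH.le N).pow_succ hH k).coeff_succ_le m

end Majorant

section IteratedDeriv

open Polynomial

variable {𝕜 : Type*} [NontriviallyNormedField 𝕜]

theorem iteratedDeriv_eval (p : 𝕜[X]) (n : ℕ) :
    iteratedDeriv n (fun x ↦ p.eval x) = fun x ↦ (derivative^[n] p).eval x := by
  induction n with
  | zero => simp
  | succ n ih =>
    rw [iteratedDeriv_succ, ih, Function.iterate_succ_apply']
    exact funext fun x ↦ Polynomial.deriv _

theorem one_div_factorial_mul_iteratedDeriv_eval_zero [CharZero 𝕜] (p : 𝕜[X]) (n : ℕ) :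
    1 / (n.factorial : 𝕜) * iteratedDeriv n (fun x ↦ p.eval x) 0 = p.coeff n := by
  have factorial_ne_zero : (n.factorial : 𝕜) ≠ 0 := Nat.cast_ne_zero.mpr n.factorial_ne_zero
  have eval_zero : (derivative^[n] p).eval 0 = n.factorial * p.coeff n := by
    rw [← coeff_zero_eq_eval_zero, coeff_iterate_derivative, zero_add, Nat.descFactorial_self,
      nsmul_eq_mul]
  simp only [iteratedDeriv_eval, eval_zero]
  field_simp

end IteratedDeriv

open Polynomial in
theorem stmt_12_general (N : ℕ) {H₀ H : ℝ} (hH₀ : 0 ≤ H₀) (hH : 0 < H) {k j : ℕ} (hk : 1 ≤ k)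
    (hkj : k < j) :
    (1 / (Nat.factorial j : ℝ)) *
        iteratedDeriv j (fun ζ : ℝ =>
          (H₀ * ζ + ∑ i ∈ Finset.Icc 2 N,
            H₀ * H ^ (i - 2) / ((i : ℝ) - 1) ^ 2 * ζ ^ i) ^ k) 0 ≤
      (2 + 6 / H) ^ (k - 1) * H₀ ^ k * H ^ (j - k - 1) / ((j : ℝ) - (k : ℝ)) ^ 2 := by
  obtain ⟨k, rfl⟩ := Nat.exists_eq_add_of_le' hk
  obtain ⟨m, rfl⟩ : ∃ m, j = m + 1 + (k + 1) := ⟨j - k - 2, by omega⟩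
  have cast_eq : ((m + 1 + (k + 1) : ℕ) : ℝ) - ((k + 1 : ℕ) : ℝ) = (m : ℝ) + 1 := by
    push_cast
    ring
  simp only [← eval_C_mul_majorantQuotient_mul_X, ← eval_pow]
  rw [one_div_factorial_mul_iteratedDeriv_eval_zero, cast_eq, Nat.add_sub_cancel,
    Nat.add_sub_cancel, Nat.add_sub_cancel, mul_pow, mul_pow, ← C_pow, coeff_C_mul, coeff_mul_X_pow]
  calc H₀ ^ (k + 1) * (majorantQuotient H N ^ (k + 1)).coeff (m + 1)
      ≤ H₀ ^ (k + 1) * ((2 + 6 / H) ^ k * (H ^ m / ((m : ℝ) + 1) ^ 2)) := by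
        gcongr
        exact coeff_majorantQuotient_pow_succ_le hH N k m
    _ = (2 + 6 / H) ^ k * H₀ ^ (k + 1) * H ^ m / ((m : ℝ) + 1) ^ 2 := by ring

/-- coefficient estimate for the powers of the majorant
`v(ζ) = H₀ζ + Σ_{k=2}^N (H₀ H^{k-2}/(k-1)²) ζ^k`. -/
theorem stmt_12 (N : ℕ) (hN : 2 ≤ N) (H₀ H : ℝ) (hH₀ : 1 ≤ H₀) (hH : 2 ≤ H) :
    ∀ k j : ℕ, 1 ≤ k → k < j → j ≤ N →
      (1 / (Nat.factorial j : ℝ)) *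
          iteratedDeriv j (fun ζ : ℝ =>
            (H₀ * ζ + ∑ i ∈ Finset.Icc 2 N,
              H₀ * H ^ (i - 2) / ((i : ℝ) - 1) ^ 2 * ζ ^ i) ^ k) 0 ≤
        6 ^ (k - 1) * H₀ ^ k * H ^ (j - k - 1) / ((j : ℝ) - (k : ℝ)) ^ 2 := by
  intro k j hk hkj _
  have hH_pos : 0 < H := by linarith
  have growth_le_six : 2 + 6 / H ≤ 6 := by
    have : 6 / H ≤ 4 := (div_le_iff₀ hH_pos).mpr (by linarith)
    linarith
  exact (stmt_12_general N (by linarith) hH_pos hk hkj).trans (by gcongr)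
end
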